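/- For every centrally symmetric convex body K in ℝ³, there exists a full-rank lattice Λ ⊂ ℝ³ such that the translates {K + λ : λ ∈ Λ} have pairwise disjoint interiors and vol(K) / covol(Λ) ≥ 0.54755. (Equivalently, the lattice packing density of K satisfies δ_L(K) ≥ 0.54755.) -/

import Mathlib

/-!
Let `K` be the unit ball of a norm `N` on `ℝ × ℝ²`; a lattice whose nonzero vectors have norm at
least `1` gives, after doubling, a packing of density `vol K / (8 covol)`. A perturbation of `N`
by a factor of at most `1 + 1e-5`, absorbed by the gap between `0.54757` and `0.54755`, makes the
section `C` of `K` by the plane `{0} × ℝ²` strictly convex.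

*The plane.* The hexagon of smallest area among the affinely regular hexagons inscribed in `C` has
vertices `±p, ±q, ±(q - p)`, and `p, q` span the planar part of the lattice; after a linear change
of coordinates they are the standard basis. Between the hexagon of `(p, q)` and that of
`(q, q - p)`, which is the same hexagon turned by one vertex, there is by continuity an inscribed
hexagon having equal mixed determinants with the two. Inserting it, and refining the gaps in the
same way two more times, adds triangles to the inscribed polygon. Since none of the determinants is
smaller than `1`, the gain is large enough to force the area `A` of `C` to be at least `3.571`.

*The next layer.* Choose `t` minimal such that some translate of `ℤ²` at height `t` avoids the
interior of `K`. Then at heights slightly below `t` the integer translates of the slice `L` of `K`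
cover the plane, so `L` has area at least `1` and its widths in the directions of the three
functionals `x.1`, `x.2`, `x.1 + x.2` add up to at least `4`. Writing `C` as a hexagon of area `3`
and six caps, one finds that `a • C + c • L` has area at least `a² A + 4 a c + c²`. These sets with
`a + c = 1` lie in the slices of `K`, so integration over the height gives
`vol K ≥ 2 t (A + 3) / 3`, and `(A + 3) / 12 > 0.54757`.
-/

open MeasureTheory Pointwise

/-- The covolume of the full-rank lattice generated by the columns of `M`:
the absolute value of the determinant. -/
noncomputable def covol {n : ℕ} (M : Matrix (Fin n) (Fin n) ℝ) : ℝ := |M.det|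

/-- The set of points of the lattice generated by the columns of `M`. -/
def latticePoints {n : ℕ} (M : Matrix (Fin n) (Fin n) ℝ) : Set (Fin n → ℝ) :=
  {v | ∃ z : Fin n → ℤ, v = M.mulVec (fun i => (z i : ℝ))}

/-- `M` generates a full-rank lattice whose translates of `K` have pairwise
disjoint interiors. -/
def IsLatticePacking {n : ℕ} (M : Matrix (Fin n) (Fin n) ℝ)
    (K : Set (Fin n → ℝ)) : Prop :=
  M.det ≠ 0 ∧ ∀ l ∈ latticePoints M, ∀ l' ∈ latticePoints M, l ≠ l' →
    Disjoint (interior (l +ᵥ K)) (interior (l' +ᵥ K))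

/-! ### The wedge product of the plane -/

/-- The wedge product (determinant) of two plane vectors, i.e. the signed area of the parallelogram
they span. -/
def wedge (a b : ℝ × ℝ) : ℝ := a.1 * b.2 - a.2 * b.1

section Cross

variable (x y z w : ℝ × ℝ) (t : ℝ)

lemma wedge_swap : wedge y x = -wedge x y := by simp only [wedge]; ring

@[simp] lemma wedge_self : wedge x x = 0 := by simp only [wedge]; ring

@[simp] lemma wedge_zero_left : wedge 0 x = 0 := by simp [wedge]

@[simp] lemma wedge_zero_right : wedge x 0 = 0 := by simp [wedge]

@[simp] lemma wedge_add_left : wedge (x + y) z = wedge x z + wedge y z := by simp [wedge]; ring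

@[simp] lemma wedge_add_right : wedge x (y + z) = wedge x y + wedge x z := by simp [wedge]; ring

@[simp] lemma wedge_sub_left : wedge (x - y) z = wedge x z - wedge y z := by simp [wedge]; ring

@[simp] lemma wedge_sub_right : wedge x (y - z) = wedge x y - wedge x z := by simp [wedge]; ring

@[simp] lemma wedge_neg_right : wedge x (-y) = -wedge x y := by simp [wedge]; ring

@[simp] lemma wedge_smul_left : wedge (t • x) y = t * wedge x y := by simp [wedge]; ring

@[simp] lemma wedge_smul_right : wedge x (t • y) = t * wedge x y := by simp [wedge]; ring

lemma wedge_plucker :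
    wedge x y * wedge z w - wedge x z * wedge y w + wedge x w * wedge y z = 0 := by
  simp only [wedge]; ring

variable {x y}

lemma eq_smul_add_smul_of_wedge_pos (h : 0 < wedge x y) (z : ℝ × ℝ) :
    z = (wedge z y / wedge x y) • x + (wedge x z / wedge x y) • y := by
  have h0 : wedge x y ≠ 0 := h.ne'
  ext <;> simp only [Prod.fst_add, Prod.snd_add, Prod.smul_fst, Prod.smul_snd, smul_eq_mul] <;>
    field_simp <;> simp only [wedge] <;> ring

lemma exists_wedge_pos (hx : x ≠ 0) : ∃ v, 0 < wedge x v := by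
  refine ⟨(-x.2, x.1), ?_⟩
  have h : x.1 ≠ 0 ∨ x.2 ≠ 0 := by
    by_contra! h
    exact hx (Prod.ext h.1 h.2)
  have e : wedge x (-x.2, x.1) = x.1 ^ 2 + x.2 ^ 2 := by simp only [wedge]; ring
  rw [e]
  rcases h with h | h <;> positivity

lemma exists_eq_smul_of_wedge_eq_zero (hx : x ≠ 0) (h : wedge x y = 0) : ∃ t : ℝ, y = t • x := by
  obtain ⟨v, hv⟩ := exists_wedge_pos hx
  exact ⟨_, by simpa [h] using eq_smul_add_smul_of_wedge_pos hv y⟩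

end Cross

/-! ### Planar cones -/

/-- `M` lies in the closed convex cone spanned by `A` and `B`. -/
def MemCone (A B M : ℝ × ℝ) : Prop := ∃ α β : ℝ, 0 ≤ α ∧ 0 ≤ β ∧ M = α • A + β • B

section MemCone

variable {A B M P : ℝ × ℝ}

lemma memCone_left (A B : ℝ × ℝ) : MemCone A B A := ⟨1, 0, by simp⟩

lemma memCone_right (A B : ℝ × ℝ) : MemCone A B B := ⟨0, 1, by simp⟩

lemma memCone_iff (h : 0 < wedge A B) : MemCone A B M ↔ 0 ≤ wedge A M ∧ 0 ≤ wedge M B := by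
  constructor
  · rintro ⟨α, β, hα, hβ, rfl⟩
    simp [mul_nonneg, hα, hβ, h.le]
  · rintro ⟨hA, hB⟩
    exact ⟨_, _, by positivity, by positivity, eq_smul_add_smul_of_wedge_pos h M⟩

lemma MemCone.symm (hM : MemCone A B M) : MemCone B A M := by
  obtain ⟨α, β, hα, hβ, rfl⟩ := hM
  exact ⟨β, α, hβ, hα, add_comm _ _⟩

lemma MemCone.trans (hM : MemCone A B M) (hP : MemCone A M P) : MemCone A B P := by
  obtain ⟨α, β, hα, hβ, rfl⟩ := hM
  obtain ⟨γ, δ, hγ, hδ, rfl⟩ := hP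
  exact ⟨γ + δ * α, δ * β, by positivity, by positivity, by module⟩

lemma memCone_of_mul_wedge_nonneg (hAB : wedge A B ≠ 0) (hM : MemCone A B M) (hP : MemCone A B P)
    (hM0 : M ≠ 0) (h : 0 ≤ wedge A B * wedge P M) : MemCone A M P := by
  obtain ⟨α, β, hα, hβ, rfl⟩ := hM
  obtain ⟨γ, δ, hγ, hδ, rfl⟩ := hP
  have hexp : wedge A B * wedge (γ • A + δ • B) (α • A + β • B) =
      wedge A B ^ 2 * (γ * β - δ * α) := by
    simp only [wedge_add_left, wedge_add_right, wedge_smul_left, wedge_smul_right, wedge_self,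
      wedge_swap A B]
    ring
  have hle : 0 ≤ γ * β - δ * α := by
    rw [hexp] at h
    exact nonneg_of_mul_nonneg_right h (by positivity)
  rcases hβ.eq_or_lt with rfl | hβ
  · have hα : 0 < α := hα.lt_of_ne (by rintro rfl; simp at hM0)
    have hδ0 : δ = 0 := by nlinarith
    exact ⟨γ, 0, hγ, le_rfl, by simp [hδ0]⟩
  · refine ⟨(γ * β - δ * α) / β, δ / β, by positivity, by positivity, ?_⟩
    match_scalars <;> field_simp
    ring

end MemCone

/-! ### Definite seminorms -/

/-- A seminorm is definite if it vanishes only at the origin, i.e. if it is a norm. -/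
def IsDefinite {E : Type*} [AddCommGroup E] [Module ℝ E] (N : Seminorm ℝ E) : Prop :=
  ∀ x, x ≠ 0 → 0 < N x

section Seminorm

variable {E : Type*} [AddCommGroup E] [Module ℝ E] (N : Seminorm ℝ E)

lemma seminorm_smul_of_nonneg {t : ℝ} (ht : 0 ≤ t) (x : E) : N (t • x) = t * N x := by
  rw [map_smul_eq_mul, Real.norm_of_nonneg ht]

lemma seminorm_smul_add_smul_le {s t : ℝ} (hs : 0 ≤ s) (ht : 0 ≤ t) (x y : E) :
    N (s • x + t • y) ≤ s * N x + t * N y := by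
  simpa only [seminorm_smul_of_nonneg N hs, seminorm_smul_of_nonneg N ht]
    using map_add_le_add N (s • x) (t • y)

variable {N}

lemma IsDefinite.seminorm_inv_smul_self (hN : IsDefinite N) {x : E} (hx : x ≠ 0) :
    N ((N x)⁻¹ • x) = 1 := by
  have h := hN x hx
  rw [seminorm_smul_of_nonneg N (by positivity), inv_mul_cancel₀ h.ne']

end Seminorm

section FiniteDimensional

variable {E : Type*} [NormedAddCommGroup E] [NormedSpace ℝ E] [FiniteDimensional ℝ E]

lemma continuous_seminorm (N : Seminorm ℝ E) : Continuous N :=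
  continuousOn_univ.1 (N.convexOn.continuousOn isOpen_univ)

lemma IsDefinite.exists_mul_norm_le {N : Seminorm ℝ E} (hN : IsDefinite N) :
    ∃ c > 0, ∀ x, c * ‖x‖ ≤ N x := by
  have : ProperSpace E := FiniteDimensional.proper ℝ E
  rcases subsingleton_or_nontrivial E with _ | _
  · exact ⟨1, one_pos, fun x ↦ by simp [Subsingleton.elim x 0]⟩
  obtain ⟨u, hu, hmin⟩ := (isCompact_sphere (0 : E) 1).exists_isMinOn
    (NormedSpace.sphere_nonempty.2 zero_le_one) (continuous_seminorm N).continuousOn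
  have hu0 : u ≠ 0 := ne_zero_of_mem_sphere one_ne_zero ⟨u, hu⟩
  refine ⟨N u, hN u hu0, fun x ↦ ?_⟩
  rcases eq_or_ne x 0 with rfl | hx
  · simp
  have hx' : 0 < ‖x‖ := norm_pos_iff.2 hx
  have hunit : ‖x‖⁻¹ • x ∈ Metric.sphere (0 : E) 1 := by simp [norm_smul, hx'.ne']
  have h : N u ≤ ‖x‖⁻¹ * N x := by
    simpa only [seminorm_smul_of_nonneg N (inv_nonneg.2 hx'.le)] using isMinOn_iff.1 hmin _ hunit
  rwa [inv_mul_eq_div, le_div_iff₀ hx'] at h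

lemma IsDefinite.isCompact_closedBall {N : Seminorm ℝ E} (hN : IsDefinite N) (r : ℝ) :
    IsCompact (N.closedBall 0 r) := by
  have : ProperSpace E := FiniteDimensional.proper ℝ E
  obtain ⟨c, hc, hle⟩ := hN.exists_mul_norm_le
  refine (ProperSpace.isCompact_closedBall (0 : E) (r / c)).of_isClosed_subset ?_ fun x hx ↦ ?_
  · simpa only [Seminorm.closedBall_zero_eq] using
      isClosed_le (continuous_seminorm N) continuous_const
  · rw [Seminorm.mem_closedBall_zero] at hx
    rw [mem_closedBall_zero_iff, le_div_iff₀ hc]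
    linarith [hle x]

end FiniteDimensional

/-! ### Strictly convex norms and unit hexagons -/

/-- A strictly convex norm on the plane: a definite seminorm for which the triangle inequality is
strict on non-parallel vectors. -/
structure IsStrictNorm (g : Seminorm ℝ (ℝ × ℝ)) : Prop where
  definite : IsDefinite g
  map_add_lt : ∀ x y, wedge x y ≠ 0 → g (x + y) < g x + g y

/-- The vectors `p, q, q - p` and their negatives are, in counterclockwise order starting with `p`,
the vertices of an affinely regular hexagon inscribed in the unit circle of `g`. -/
structure UnitHexagon (g : Seminorm ℝ (ℝ × ℝ)) (p q : ℝ × ℝ) : Prop where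
  left : g p = 1
  right : g q = 1
  sub : g (q - p) = 1
  wedge_pos : 0 < wedge p q

section Chords

variable {g : Seminorm ℝ (ℝ × ℝ)} {x y z : ℝ × ℝ} {a b : ℝ}

lemma IsStrictNorm.map_smul_add_smul_lt (hg : IsStrictNorm g) (ha : 0 < a) (hb : 0 < b)
    (h : wedge x y ≠ 0) : g (a • x + b • y) < a * g x + b * g y := by
  simpa only [seminorm_smul_of_nonneg g ha.le, seminorm_smul_of_nonneg g hb.le] using
    hg.map_add_lt (a • x) (b • y) (by simp [ha.ne', hb.ne', h])

lemma eq_of_eq_smul_of_unit (ha : 0 ≤ a) (hx : g x = 1) (hy : g y = 1) (h : y = a • x) :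
    y = x := by
  rw [h, seminorm_smul_of_nonneg g ha, hx, mul_one] at hy
  rw [h, hy, one_smul]

lemma one_le_add_of_unit_mem_cone (ha : 0 ≤ a) (hb : 0 ≤ b) (hx : g x = 1) (hz : g z = 1)
    (hy : g (a • x + b • z) = 1) : 1 ≤ a + b := by
  simpa [hx, hy, hz] using seminorm_smul_add_smul_le g ha hb x z

-- The chord from `x` to `y` and the radius to `z` are opposite sides of a quadrilateral whose
-- diagonals are the chord from `x` to `z` and the radius to `y`.
lemma IsStrictNorm.map_sub_lt_map_sub (hg : IsStrictNorm g) (ha : 0 < a) (hb : 0 ≤ b)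
    (hxz : wedge x z ≠ 0) (hx : g x = 1) (hz : g z = 1) (hy : g y = 1)
    (hyab : y = a • x + b • z) : g (y - x) < g (z - x) := by
  have hs : 1 ≤ a + b := one_le_add_of_unit_mem_cone ha.le hb hx hz (hyab ▸ hy)
  have hab : 0 < a + b := by linarith
  have hzxy : wedge (z - x) y = -((a + b) * wedge x z) := by
    simp only [hyab, wedge_swap x z, wedge_sub_left, wedge_add_right, wedge_smul_right, wedge_self]
    ring
  have h1 := hg.map_smul_add_smul_lt ha one_pos (x := z - x) (y := y)
    (by simp [hzxy, hab.ne', hxz])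
  have h2 := seminorm_smul_add_smul_le g hb (sub_nonneg.2 hs) (z - x) y
  have ez : a • (z - x) + (1 : ℝ) • y = (a + b) • z := by rw [hyab]; module
  have ey : b • (z - x) + (a + b - 1) • y = (a + b) • (y - x) := by rw [hyab]; module
  rw [ez, hy, seminorm_smul_of_nonneg g hab.le, hz] at h1
  rw [ey, hy, seminorm_smul_of_nonneg g hab.le] at h2
  have h3 : (a + b) * g (y - x) < (a + b) * g (z - x) := by linarith
  exact lt_of_mul_lt_mul_left h3 hab.le

end Chords

namespace UnitHexagon

variable {g : Seminorm ℝ (ℝ × ℝ)} {p q p' q' : ℝ × ℝ}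

lemma rotate (h : UnitHexagon g p q) : UnitHexagon g q (q - p) where
  left := h.right
  right := h.sub
  sub := by rw [sub_sub_cancel_left, map_neg_eq_map, h.left]
  wedge_pos := by simpa [wedge_swap p q] using h.wedge_pos

lemma coord_le_of_nonneg (h : UnitHexagon g p q) {a b : ℝ} (ha : 0 ≤ a) (hb : 0 ≤ b) :
    a ≤ g (a • p + b • q) ∧ b ≤ g (a • p + b • q) ∧ g (a • p + b • q) ≤ a + b := by
  set x := a • p + b • q with hx
  have hq := seminorm_smul_add_smul_le g zero_le_one ha x (q - p)
  have hp := seminorm_smul_add_smul_le g zero_le_one hb x (p - q)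
  have hpq := seminorm_smul_add_smul_le g ha hb p q
  rw [show (1 : ℝ) • x + a • (q - p) = (a + b) • q by rw [hx]; module,
    seminorm_smul_of_nonneg g (by positivity), h.right, h.sub] at hq
  rw [show (1 : ℝ) • x + b • (p - q) = (a + b) • p by rw [hx]; module,
    seminorm_smul_of_nonneg g (by positivity), h.left, map_sub_rev, h.sub] at hp
  rw [← hx, h.left, h.right] at hpq
  exact ⟨by linarith, by linarith, by linarith⟩

lemma abs_coord_le_of_mul_nonneg (h : UnitHexagon g p q) {a b : ℝ} (hab : 0 ≤ a * b) :
    |a| ≤ g (a • p + b • q) ∧ |b| ≤ g (a • p + b • q) ∧ g (a • p + b • q) ≤ |a + b| := by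
  rcases mul_nonneg_iff.1 hab with ⟨ha, hb⟩ | ⟨ha, hb⟩
  · rw [abs_of_nonneg ha, abs_of_nonneg hb, abs_of_nonneg (add_nonneg ha hb)]
    exact h.coord_le_of_nonneg ha hb
  · have := h.coord_le_of_nonneg (neg_nonneg.2 ha) (neg_nonneg.2 hb)
    rw [show -a • p + -b • q = -(a • p + b • q) by module, map_neg_eq_map] at this
    rw [abs_of_nonpos ha, abs_of_nonpos hb, abs_of_nonpos (add_nonpos ha hb), neg_add]
    exact this

lemma abs_coord_le (h : UnitHexagon g p q) (a b : ℝ) :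
    (|a| ≤ g (a • p + b • q) ∧ |b| ≤ g (a • p + b • q) ∧ g (a • p + b • q) ≤ |a + b|) ∨
    (|a + b| ≤ g (a • p + b • q) ∧ |a| ≤ g (a • p + b • q) ∧ g (a • p + b • q) ≤ |b|) ∨
    (|b| ≤ g (a • p + b • q) ∧ |a + b| ≤ g (a • p + b • q) ∧ g (a • p + b • q) ≤ |a|) := by
  have hsign : 0 ≤ a * b ∨ 0 ≤ (a + b) * -a ∨ 0 ≤ b * -(a + b) := by
    by_contra! hneg
    nlinarith [sq_nonneg a, sq_nonneg b]
  refine hsign.imp h.abs_coord_le_of_mul_nonneg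
    (Or.imp (fun hab ↦ ?_) fun hab ↦ ?_)
  · have := h.rotate.abs_coord_le_of_mul_nonneg hab
    rwa [show (a + b) • q + -a • (q - p) = a • p + b • q by module, abs_neg,
      add_neg_cancel_comm] at this
  · have := h.rotate.rotate.abs_coord_le_of_mul_nonneg hab
    rwa [show b • (q - p) + -(a + b) • (q - p - q) = a • p + b • q by module, abs_neg,
      show b + -(a + b) = -a by ring, abs_neg] at this

lemma wedge_right_nonneg (hg : IsStrictNorm g) (h : UnitHexagon g p q) (h' : UnitHexagon g p' q')
    (hp' : MemCone p q p') : 0 ≤ wedge q q' := by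
  by_contra! hneg
  obtain ⟨hpp', hp'q⟩ := (memCone_iff h.wedge_pos).1 hp'
  have hq'q : 0 < wedge q' q := by rw [wedge_swap]; linarith
  have hpq' : 0 < wedge p q' := by
    have := wedge_plucker p p' q' q
    nlinarith [mul_nonneg hpp' hq'q.le, mul_pos h.wedge_pos h'.wedge_pos]
  have hlt : g (q' - p) < 1 := h.sub ▸ hg.map_sub_lt_map_sub (div_pos hq'q h.wedge_pos)
    (div_nonneg hpq'.le h.wedge_pos.le) h.wedge_pos.ne' h.left h.right h'.right
    (eq_smul_add_smul_of_wedge_pos h.wedge_pos q')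
  have hp'eq := eq_smul_add_smul_of_wedge_pos hpq' p'
  rcases hpp'.eq_or_lt with h0 | h0
  · rw [← h0, zero_div, zero_smul, add_zero] at hp'eq
    have hp'p : p' = p := eq_of_eq_smul_of_unit
      (div_nonneg h'.wedge_pos.le hpq'.le) h.left h'.left hp'eq
    rw [← hp'p, h'.sub] at hlt
    exact lt_irrefl _ hlt
  · have := hg.map_sub_lt_map_sub (div_pos h0 hpq') (div_nonneg h'.wedge_pos.le hpq'.le)
      (by rw [wedge_swap]; simpa using hpq'.ne') h'.right h.left h'.left
      (hp'eq.trans (add_comm _ _))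
    rw [map_sub_rev, h'.sub, map_sub_rev] at this
    linarith

lemma memCone_right (hg : IsStrictNorm g) (h : UnitHexagon g p q) (h' : UnitHexagon g p' q')
    (hp' : MemCone p q p') : MemCone q (q - p) q' := by
  have hqq' := h.wedge_right_nonneg hg h' hp'
  have hp'q := ((memCone_iff h.wedge_pos).1 hp').2
  exact (memCone_iff h.rotate.wedge_pos).2 ⟨hqq', h'.wedge_right_nonneg hg h.rotate
    ((memCone_iff h'.wedge_pos).2 ⟨hp'q, hqq'⟩)⟩

lemma right_unique (hg : IsStrictNorm g) (h : UnitHexagon g p q) (h' : UnitHexagon g p q') :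
    q' = q := by
  have h1 := h.wedge_right_nonneg hg h' (memCone_left p q)
  have h2 := h'.wedge_right_nonneg hg h (memCone_left p q')
  have hqq' : wedge q' q = 0 := by rw [wedge_swap] at h2 ⊢; linarith
  have hq' := eq_smul_add_smul_of_wedge_pos h.wedge_pos q'
  rw [hqq', zero_div, zero_smul, zero_add] at hq'
  exact eq_of_eq_smul_of_unit (div_pos h'.wedge_pos h.wedge_pos).le h.right h'.right hq'

lemma wedge_ne_zero_of_unit (hp : g p = 1) (hq : g q = 1) (hpq : g (q - p) = 1) :
    wedge p q ≠ 0 := by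
  intro h0
  obtain ⟨t, rfl⟩ := exists_eq_smul_of_wedge_eq_zero (x := p) (by rintro rfl; simp at hp) h0
  rw [show t • p - p = (t - 1) • p by module] at hpq
  simp only [map_smul_eq_mul, hp, Real.norm_eq_abs, mul_one] at hq hpq
  rcases abs_eq zero_le_one |>.1 hq with rfl | rfl <;> norm_num at hpq

-- The chord from `p` to the unit vector in direction `s • p + (1 - |s|) • v` has length 0 at
-- `s = 1` and length 2 at `s = -1`.
lemma exists_right (hg : IsDefinite g) (hp : g p = 1) : ∃ q, UnitHexagon g p q := by
  have hp0 : p ≠ 0 := by rintro rfl; simp at hp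
  obtain ⟨v, hv⟩ := exists_wedge_pos hp0
  let w : ℝ → ℝ × ℝ := fun s ↦ s • p + (1 - |s|) • v
  have hwp (s : ℝ) : wedge p (w s) = (1 - |s|) * wedge p v := by simp [w]
  have hw0 (s : ℝ) : w s ≠ 0 := by
    intro h0
    have h1 := hwp s
    have h2 : wedge (w s) v = s * wedge p v := by simp [w]
    rw [h0, wedge_zero_right, eq_comm, mul_eq_zero, or_iff_left hv.ne'] at h1
    rw [h0, wedge_zero_left, eq_comm, mul_eq_zero, or_iff_left hv.ne'] at h2
    simp [h2] at h1
  let Q : ℝ → ℝ × ℝ := fun s ↦ (g (w s))⁻¹ • w s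
  have hgc := continuous_seminorm g
  have hwc : Continuous w := by fun_prop
  have hQc : Continuous Q :=
    ((hgc.comp hwc).inv₀ fun s ↦ (hg _ (hw0 s)).ne').smul hwc
  have hQ1 : Q 1 = p := by simp [Q, w, hp]
  have hQneg : Q (-1) = -p := by simp [Q, w, hp]
  have hend : g (-p - p) = 2 := by
    rw [show -p - p = (-2 : ℝ) • p by module, map_smul_eq_mul, hp]; norm_num
  obtain ⟨s, ⟨hs1, hs2⟩, hs⟩ := intermediate_value_Icc' (by norm_num : (-1 : ℝ) ≤ 1)
    (hgc.comp (hQc.sub continuous_const)).continuousOn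
    (show (1 : ℝ) ∈ Set.Icc (g (Q 1 - p)) (g (Q (-1) - p)) by
      rw [hQ1, hQneg, hend, sub_self, map_zero]; norm_num)
  have hQs : g (Q s) = 1 := hg.seminorm_inv_smul_self (hw0 s)
  refine ⟨Q s, hp, hQs, hs, lt_of_le_of_ne ?_ (wedge_ne_zero_of_unit hp hQs hs).symm⟩
  have h1 : 0 ≤ 1 - |s| := sub_nonneg.2 (abs_le.2 ⟨hs1, hs2⟩)
  have h2 := hg _ (hw0 s)
  rw [wedge_smul_right, hwp]
  positivity

end UnitHexagon

/-! ### The halving step -/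

/-- The mixed determinant of the hexagons of `(p, q)` and `(p', q')`: half the polarization of the
quadratic form `(p, q) ↦ wedge p q`. -/
noncomputable def mixedDet (p q p' q' : ℝ × ℝ) : ℝ := (wedge p q' + wedge p' q) / 2

/-- The sum of the wedge products of corresponding vertices of the hexagons of `(p, q)` and
`(p', q')`, taken over half a turn. -/
def wedgeSum (p q p' q' : ℝ × ℝ) : ℝ := wedge p p' + wedge q q' + wedge (q - p) (q' - p')

/-- Twice the signed area of the triangle `A, M, B`. -/
def triangleExcess (A M B : ℝ × ℝ) : ℝ := wedge A M + wedge M B - wedge A B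

section MixedDet

variable (p q p' q' : ℝ × ℝ)

lemma mixedDet_self : mixedDet p q p q = wedge p q := by simp [mixedDet]

lemma mixedDet_comm : mixedDet p q p' q' = mixedDet p' q' p q := by simp only [mixedDet]; ring

end MixedDet

lemma isPreconnected_of_isCompact_of_injOn {X Y : Type*} [TopologicalSpace X] [TopologicalSpace Y]
    [T2Space Y] {S : Set X} {f : X → Y} (hS : IsCompact S) (hf : ContinuousOn f S)
    (hinj : Set.InjOn f S) (himage : IsPreconnected (f '' S)) : IsPreconnected S := by
  have := isCompact_iff_compactSpace.1 hS
  have hemb : Topology.IsClosedEmbedding (S.domRestrict f) :=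
    hf.domRestrict.isClosedEmbedding hinj.injective
  rw [← Subtype.range_coe (s := S), ← Set.image_univ,
    Topology.IsInducing.subtypeVal.isPreconnected_image,
    ← hemb.isInducing.isPreconnected_image, Set.image_univ, Set.range_domRestrict]
  exact himage

section Halving

variable {g : Seminorm ℝ (ℝ × ℝ)} {p q p' q' P Q : ℝ × ℝ}

lemma IsStrictNorm.isCompact_setOf_unitHexagon (hg : IsStrictNorm g) :
    IsCompact {z : (ℝ × ℝ) × (ℝ × ℝ) | UnitHexagon g z.1 z.2} := by
  have hgc := continuous_seminorm g
  have heq : {z : (ℝ × ℝ) × (ℝ × ℝ) | UnitHexagon g z.1 z.2} =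
      {z | g z.1 = 1 ∧ g z.2 = 1 ∧ g (z.2 - z.1) = 1 ∧ 0 ≤ wedge z.1 z.2} := by
    ext ⟨x, y⟩
    exact ⟨fun h ↦ ⟨h.left, h.right, h.sub, h.wedge_pos.le⟩, fun ⟨hx, hy, hxy, h⟩ ↦
      ⟨hx, hy, hxy, h.lt_of_ne (UnitHexagon.wedge_ne_zero_of_unit hx hy hxy).symm⟩⟩
  simp only [heq, Set.ofPred_and]
  refine ((hg.definite.isCompact_closedBall 1).prod
    (hg.definite.isCompact_closedBall 1)).of_isClosed_subset ?_ fun z hz ↦ ?_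
  · refine (isClosed_eq (by fun_prop) continuous_const).inter
      ((isClosed_eq (by fun_prop) continuous_const).inter
      ((isClosed_eq (by fun_prop) continuous_const).inter
      (isClosed_le continuous_const ?_)))
    simp only [wedge]
    fun_prop
  · simpa only [Set.mem_prod, Seminorm.mem_closedBall_zero] using ⟨hz.1.le, hz.2.1.le⟩

/-- The arc of the unit circle of `g` from `p` to `p'`: the radial projection of the segment. -/
def unitArc (g : Seminorm ℝ (ℝ × ℝ)) (p p' : ℝ × ℝ) : Set (ℝ × ℝ) :=
  (fun w ↦ (g w)⁻¹ • w) '' segment ℝ p p'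

lemma ne_zero_of_mem_segment (h : UnitHexagon g p q) (hp'0 : p' ≠ 0) (hp' : MemCone p q p')
    {w : ℝ × ℝ} (hw : w ∈ segment ℝ p p') : w ≠ 0 := by
  obtain ⟨a, b, ha, hb, hab, rfl⟩ := hw
  have hp'q := ((memCone_iff h.wedge_pos).1 hp').2
  intro h0
  rcases ha.eq_or_lt with rfl | ha
  · simp_all
  · have hwq : wedge (a • p + b • p') q = a * wedge p q + b * wedge p' q := by simp
    rw [h0, wedge_zero_left] at hwq
    linarith [mul_pos ha h.wedge_pos, mul_nonneg hb hp'q]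

/-- The unit hexagons of `(p, q)` and `(p', q')` follow each other: `p'` lies in the cone of `p` and
`q`. -/
structure ConsecutiveHexagons (g : Seminorm ℝ (ℝ × ℝ)) (p q p' q' : ℝ × ℝ) : Prop where
  left : UnitHexagon g p q
  right : UnitHexagon g p' q'
  memCone : MemCone p q p'

lemma ConsecutiveHexagons.rotate (hg : IsStrictNorm g) (h : ConsecutiveHexagons g p q p' q') :
    ConsecutiveHexagons g q (q - p) q' (q' - p') :=
  ⟨h.left.rotate, h.right.rotate, h.left.memCone_right hg h.right h.memCone⟩

lemma ConsecutiveHexagons.wedge_nonneg (h : ConsecutiveHexagons g p q p' q') :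
    0 ≤ wedge p p' :=
  ((memCone_iff h.left.wedge_pos).1 h.memCone).1

lemma exists_unitHexagon_mixedDet_eq (hg : IsStrictNorm g) (h : ConsecutiveHexagons g p q p' q')
    (hm : mixedDet p q p' q' ≤ wedge p q) (hm' : mixedDet p q p' q' ≤ wedge p' q') :
    ∃ P Q, UnitHexagon g P Q ∧ MemCone p p' P ∧ mixedDet p' q' P Q = mixedDet p q P Q := by
  have hp'0 : p' ≠ 0 := by rintro rfl; simpa using h.right.left
  have h0 {w} (hw : w ∈ segment ℝ p p') : w ≠ 0 :=
    ne_zero_of_mem_segment h.left hp'0 h.memCone hw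
  have hgc := continuous_seminorm g
  have hproj : ContinuousOn (fun w ↦ (g w)⁻¹ • w) (segment ℝ p p') :=
    (hgc.continuousOn.inv₀ fun w hw ↦ (hg.definite w (h0 hw)).ne').smul continuousOn_id
  have harc : IsCompact (unitArc g p p') := by
    refine IsCompact.image_of_continuousOn ?_ hproj
    rw [segment_eq_image]
    exact isCompact_Icc.image (by fun_prop)
  let S : Set ((ℝ × ℝ) × (ℝ × ℝ)) := {z | UnitHexagon g z.1 z.2 ∧ z.1 ∈ unitArc g p p'}
  have hS : IsCompact S :=
    hg.isCompact_setOf_unitHexagon.inter_right (harc.isClosed.preimage continuous_fst)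
  have hinj : Set.InjOn Prod.fst S := by
    rintro ⟨x, y⟩ hy ⟨-, y'⟩ hy' rfl
    exact Prod.ext rfl (hy'.1.right_unique hg hy.1)
  have himage : Prod.fst '' S = unitArc g p p' := by
    refine Set.Subset.antisymm (Set.image_subset_iff.2 fun z hz ↦ hz.2) fun x hx ↦ ?_
    obtain ⟨w, hw, rfl⟩ := id hx
    obtain ⟨y, hy⟩ := UnitHexagon.exists_right hg.definite
      (hg.definite.seminorm_inv_smul_self (h0 hw))
    exact ⟨(_, y), ⟨hy, hx⟩, rfl⟩
  have hconn : IsPreconnected S := isPreconnected_of_isCompact_of_injOn hS continuousOn_fst hinj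
    (himage ▸ (convex_segment p p').isPreconnected.image _ hproj)
  have hmem : (p, q) ∈ S := ⟨h.left, p, left_mem_segment ℝ p p', by simp [h.left.left]⟩
  have hmem' : (p', q') ∈ S := ⟨h.right, p', right_mem_segment ℝ p p', by simp [h.right.left]⟩
  obtain ⟨⟨P, Q⟩, ⟨hPQ, w, ⟨a, b, ha, hb, -, hw⟩, rfl⟩, heq⟩ :=
    hconn.intermediate_value₂ hmem hmem' (f := fun z ↦ mixedDet p' q' z.1 z.2)
      (g := fun z ↦ mixedDet p q z.1 z.2) (by unfold mixedDet wedge; fun_prop)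
      (by unfold mixedDet wedge; fun_prop)
      (by simpa only [mixedDet_self, mixedDet_comm p' q' p q] using hm)
      (by simpa only [mixedDet_self] using hm')
  refine ⟨_, Q, hPQ, ⟨(g w)⁻¹ * a, (g w)⁻¹ * b, by positivity, by positivity, ?_⟩, heq⟩
  simp only [← hw]
  module

/-- The hexagon of `(P, Q)` halves the pair of hexagons of `(p, q)` and `(p', q')`: its vertices lie
between theirs, and its mixed determinants with the two agree. -/
structure IsHalving (g : Seminorm ℝ (ℝ × ℝ)) (p q p' q' P Q : ℝ × ℝ) : Prop where
  outer : ConsecutiveHexagons g p q p' q'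
  left : ConsecutiveHexagons g p q P Q
  right : ConsecutiveHexagons g P Q p' q'
  between : MemCone p p' P
  between_rotate : MemCone q q' Q
  between_rotate_rotate : MemCone (q - p) (q' - p') (Q - P)
  mixedDet_eq : mixedDet p' q' P Q = mixedDet p q P Q

lemma ConsecutiveHexagons.memCone_of_between (hg : IsStrictNorm g)
    (h : ConsecutiveHexagons g p q p' q') (hPQ : UnitHexagon g P Q) (hP : MemCone p p' P) :
    MemCone P Q p' := by
  have hpq := h.left.wedge_pos
  have hpP : MemCone p q P := h.memCone.trans hP
  have hPq := ((memCone_iff hpq).1 hpP).2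
  have hPp' : 0 ≤ wedge P p' := by
    obtain ⟨α, β, hα, -, rfl⟩ := hP
    simpa using mul_nonneg hα h.wedge_nonneg
  have hP0 : P ≠ 0 := by rintro rfl; simpa using hPQ.left
  have hq : MemCone P Q q :=
    (memCone_iff hPQ.wedge_pos).2 ⟨hPq, h.left.wedge_right_nonneg hg hPQ hpP⟩
  refine hq.trans (MemCone.symm ?_)
  refine memCone_of_mul_wedge_nonneg ?_ hpP.symm h.memCone.symm hP0 ?_
  · rw [wedge_swap]; exact neg_ne_zero.2 hpq.ne'
  · rw [wedge_swap p q, wedge_swap P p', neg_mul_neg]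
    exact mul_nonneg hpq.le hPp'

lemma ConsecutiveHexagons.between_rotate (hg : IsStrictNorm g)
    (h : ConsecutiveHexagons g p q p' q') (hPQ : UnitHexagon g P Q) (hP : MemCone p p' P) :
    MemCone q q' Q := by
  have hq'0 : q' ≠ 0 := by rintro rfl; simpa using h.right.right
  have hq := h.left.rotate.wedge_pos
  refine memCone_of_mul_wedge_nonneg hq.ne' (h.rotate hg).memCone
    (h.left.memCone_right hg hPQ (h.memCone.trans hP)) hq'0 (mul_nonneg hq.le ?_)
  exact hPQ.wedge_right_nonneg hg h.right (h.memCone_of_between hg hPQ hP)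

lemma exists_isHalving (hg : IsStrictNorm g) (h : ConsecutiveHexagons g p q p' q')
    (hm : mixedDet p q p' q' ≤ wedge p q) (hm' : mixedDet p q p' q' ≤ wedge p' q') :
    ∃ P Q, IsHalving g p q p' q' P Q := by
  obtain ⟨P, Q, hPQ, hP, heq⟩ := exists_unitHexagon_mixedDet_eq hg h hm hm'
  have hQ : MemCone q q' Q := h.between_rotate hg hPQ hP
  exact ⟨P, Q, h, ⟨h.left, hPQ, h.memCone.trans hP⟩,
    ⟨hPQ, h.right, h.memCone_of_between hg hPQ hP⟩, hP, hQ,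
    (h.rotate hg).between_rotate hg hPQ.rotate hQ, heq⟩

lemma triangleExcess_nonneg {A B M : ℝ × ℝ} (hA : g A = 1) (hB : g B = 1) (hM : g M = 1)
    (hAB : 0 ≤ wedge A B) (hcone : MemCone A B M) : 0 ≤ triangleExcess A M B := by
  obtain ⟨α, β, hα, hβ, rfl⟩ := hcone
  have h : triangleExcess A (α • A + β • B) B = (α + β - 1) * wedge A B := by
    simp only [triangleExcess, wedge_add_left, wedge_add_right, wedge_smul_left, wedge_smul_right,
      wedge_self]
    ring
  rw [h]
  exact mul_nonneg (sub_nonneg.2 (one_le_add_of_unit_mem_cone hα hβ hA hB hM)) hAB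

end Halving

/-! ### The excess of a halving -/

/-- Twice the area gained when the hexagon of `(P, Q)` is inserted between those of `(p, q)` and
`(p', q')`, counted over half a turn. -/
def excessSum (p q p' q' P Q : ℝ × ℝ) : ℝ :=
  triangleExcess p P p' + triangleExcess q Q q' + triangleExcess (q - p) (Q - P) (q' - p')

/-- For two hexagons with determinants `D, D'`, mixed determinant `m` and wedge sum `S`, this bounds
the spread of the three wedge products of corresponding vertices around their mean `S / 3`. -/
noncomputable def wedgeSpread (D D' m S : ℝ) : ℝ := √(12 * m ^ 2 + S ^ 2 - 12 * (D * D'))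

lemma wedgeSpread_comm (D D' m S : ℝ) : wedgeSpread D D' m S = wedgeSpread D' D m S := by
  rw [wedgeSpread, mul_comm D, wedgeSpread]

section Excess

variable (p q p' q' P Q : ℝ × ℝ)

lemma wedgeSum_add_wedgeSum :
    wedgeSum p q P Q + wedgeSum P Q p' q' = wedgeSum p q p' q' + excessSum p q p' q' P Q := by
  simp only [wedgeSum, excessSum, triangleExcess]
  ring

lemma wedgeSum_mul_wedgeSum_sub (u v : ℝ × ℝ) :
    wedgeSum p q u v * wedgeSum P Q u v - 2 * (wedge p u * wedge P u + wedge q v * wedge Q v +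
        wedge (q - p) (v - u) * wedge (Q - P) (v - u)) =
      4 * (mixedDet p q P Q * wedge u v - mixedDet p q u v * mixedDet P Q u v) := by
  simp only [wedgeSum, mixedDet, wedge, Prod.fst_sub, Prod.snd_sub]
  ring

lemma wedgeSpread_radicand_eq :
    12 * mixedDet p q p' q' ^ 2 + wedgeSum p q p' q' ^ 2 - 12 * (wedge p q * wedge p' q') =
      2 * ((wedge p p' - wedge q q') ^ 2 + (wedge p p' - wedge (q - p) (q' - p')) ^ 2 +
        (wedge q q' - wedge (q - p) (q' - p')) ^ 2) := by
  have h := wedgeSum_mul_wedgeSum_sub p q p q p' q'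
  rw [mixedDet_self] at h
  simp only [wedgeSum] at h ⊢
  linear_combination 3 * h

lemma wedge_sub_eq_wedge_add_triangleExcess :
    wedge P (p' - p) = wedge p p' + triangleExcess p P p' := by
  rw [wedge_sub_right, triangleExcess, wedge_swap p P]
  ring

lemma wedge_sub_self_right : wedge p (p' - p) = wedge p p' := by simp

lemma wedge_sub_sub :
    wedge (p' - p) (q' - q) = wedge p q + wedge p' q' - 2 * mixedDet p q p' q' := by
  simp only [wedge_sub_left, wedge_sub_right, mixedDet]
  ring

lemma mixedDet_sub : mixedDet P Q (p' - p) (q' - q) = mixedDet p' q' P Q - mixedDet p q P Q := by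
  simp only [wedge_sub_left, wedge_sub_right, mixedDet]
  ring

variable {p q p' q' P Q}

-- The next two identities are `wedgeSum_mul_wedgeSum_sub` for the difference `(p' - p, q' - q)` of
-- the outer hexagons, with which the middle hexagon has mixed determinant zero.
lemma four_mul_mul_mixedDet (h : mixedDet p' q' P Q = mixedDet p q P Q) :
    4 * (wedge p q + wedge p' q' - 2 * mixedDet p q p' q') * mixedDet p q P Q =
      4 * (wedge p q * wedge p' q' - mixedDet p q p' q' ^ 2) +
      wedgeSum p q p' q' * excessSum p q p' q' P Q -
      2 * (wedge p p' * triangleExcess p P p' + wedge q q' * triangleExcess q Q q' +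
        wedge (q - p) (q' - p') * triangleExcess (q - p) (Q - P) (q' - p')) := by
  have h0 := wedgeSum_mul_wedgeSum_sub p q p q p' q'
  have h1 := wedgeSum_mul_wedgeSum_sub p q P Q (p' - p) (q' - q)
  rw [mixedDet_sub p q p' q' P Q, wedge_sub_sub p q p' q', h, sub_self, mul_zero, sub_zero] at h1
  simp only [wedgeSum, sub_sub_sub_comm q' q p' p, wedge_sub_self_right, mixedDet_self,
    wedge_sub_eq_wedge_add_triangleExcess p p' P, wedge_sub_eq_wedge_add_triangleExcess q q' Q,
    wedge_sub_eq_wedge_add_triangleExcess (q - p) (q' - p') (Q - P)] at h0 h1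
  simp only [wedgeSum, excessSum]
  linear_combination h0 - h1

lemma four_mul_mul_wedge (h : mixedDet p' q' P Q = mixedDet p q P Q) :
    4 * (wedge p q + wedge p' q' - 2 * mixedDet p q p' q') * wedge P Q =
      4 * (wedge p q * wedge p' q' - mixedDet p q p' q' ^ 2) +
      2 * (wedgeSum p q p' q' * excessSum p q p' q' P Q -
      2 * (wedge p p' * triangleExcess p P p' + wedge q q' * triangleExcess q Q q' +
        wedge (q - p) (q' - p') * triangleExcess (q - p) (Q - P) (q' - p'))) +
      (excessSum p q p' q' P Q ^ 2 - 2 * (triangleExcess p P p' ^ 2 + triangleExcess q Q q' ^ 2 +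
        triangleExcess (q - p) (Q - P) (q' - p') ^ 2)) := by
  have h0 := wedgeSum_mul_wedgeSum_sub p q p q p' q'
  have h1 := wedgeSum_mul_wedgeSum_sub P Q P Q (p' - p) (q' - q)
  rw [mixedDet_sub p q p' q' P Q, wedge_sub_sub p q p' q', h, sub_self, mul_zero, sub_zero] at h1
  simp only [wedgeSum, sub_sub_sub_comm q' q p' p, mixedDet_self,
    wedge_sub_eq_wedge_add_triangleExcess p p' P, wedge_sub_eq_wedge_add_triangleExcess q q' Q,
    wedge_sub_eq_wedge_add_triangleExcess (q - p) (q' - p') (Q - P)] at h0 h1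
  simp only [wedgeSum, excessSum]
  linear_combination h0 - h1

end Excess

lemma abs_three_mul_sub_le {c₁ c₂ c₃ e₁ e₂ e₃ k : ℝ} (h₁ : 0 ≤ e₁) (h₂ : 0 ≤ e₂) (h₃ : 0 ≤ e₃)
    (hk : 0 ≤ k) (hc : 2 * ((c₁ - c₂) ^ 2 + (c₁ - c₃) ^ 2 + (c₂ - c₃) ^ 2) = k ^ 2) :
    |3 * (c₁ * e₁ + c₂ * e₂ + c₃ * e₃) - (c₁ + c₂ + c₃) * (e₁ + e₂ + e₃)| ≤
      k * (e₁ + e₂ + e₃) := by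
  have hdev {a b c e : ℝ} (he : 0 ≤ e)
      (h : 2 * ((a - b) ^ 2 + (a - c) ^ 2 + (b - c) ^ 2) = k ^ 2) :
      |(2 * a - b - c) * e| ≤ k * e := by
    rw [abs_mul, abs_of_nonneg he]
    gcongr
    exact abs_le_of_sq_le_sq (by nlinarith only [h, sq_nonneg (b - c)]) hk
  calc
    _ = |(2 * c₁ - c₂ - c₃) * e₁ + (2 * c₂ - c₁ - c₃) * e₂ + (2 * c₃ - c₁ - c₂) * e₃| := by
      ring_nf
    _ ≤ k * e₁ + k * e₂ + k * e₃ := (abs_add_three _ _ _).trans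
      (add_le_add_three (hdev h₁ hc) (hdev h₂ (by linear_combination hc))
        (hdev h₃ (by linear_combination hc)))
    _ = k * (e₁ + e₂ + e₃) := by ring

/-- What halving two hexagons with determinants `D, D'`, mixed determinant `m` and wedge sum `S`
by a hexagon with determinant `M`, mixed determinant `μ` with both and excess sum `G` tells about
these numbers. -/
structure HalvingBounds (D D' m S G M μ : ℝ) : Prop where
  sum_nonneg : 0 ≤ S
  excess_nonneg : 0 ≤ G
  radicand_nonneg : 12 * (D * D') ≤ 12 * m ^ 2 + S ^ 2
  wedge_le : 12 * (D + D' - 2 * m) * (M - 1) ≤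
    2 * G * (S + 2 * wedgeSpread D D' m S) + G ^ 2 - 12 * ((1 - m) ^ 2 - (D - 1) * (D' - 1))
  mixedDet_le : 12 * ((1 - m) ^ 2 - (D - 1) * (D' - 1)) - G * (S + 2 * wedgeSpread D D' m S) ≤
    12 * (D + D' - 2 * m) * (1 - μ)
  le_mixedDet : 12 * (D * D' - m ^ 2) + G * (S - 2 * wedgeSpread D D' m S) ≤
    12 * (D + D' - 2 * m) * μ

section HalvingBounds

variable {g : Seminorm ℝ (ℝ × ℝ)} {p q p' q' P Q : ℝ × ℝ}

lemma wedgeSpread_sq : wedgeSpread (wedge p q) (wedge p' q') (mixedDet p q p' q')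
    (wedgeSum p q p' q') ^ 2 =
      2 * ((wedge p p' - wedge q q') ^ 2 + (wedge p p' - wedge (q - p) (q' - p')) ^ 2 +
        (wedge q q' - wedge (q - p) (q' - p')) ^ 2) := by
  rw [wedgeSpread, wedgeSpread_radicand_eq, Real.sq_sqrt (by positivity)]

lemma ConsecutiveHexagons.wedgeSum_nonneg (hg : IsStrictNorm g)
    (h : ConsecutiveHexagons g p q p' q') : 0 ≤ wedgeSum p q p' q' :=
  add_nonneg (add_nonneg h.wedge_nonneg (h.rotate hg).wedge_nonneg)
    ((h.rotate hg).rotate hg).wedge_nonneg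

lemma ConsecutiveHexagons.triangleExcess_nonneg (h : ConsecutiveHexagons g p q p' q') {M : ℝ × ℝ}
    (hM : g M = 1) (hcone : MemCone p p' M) : 0 ≤ triangleExcess p M p' :=
  _root_.triangleExcess_nonneg h.left.left h.right.left hM h.wedge_nonneg hcone

lemma IsHalving.halvingBounds (hg : IsStrictNorm g) (h : IsHalving g p q p' q' P Q) :
    HalvingBounds (wedge p q) (wedge p' q') (mixedDet p q p' q') (wedgeSum p q p' q')
      (excessSum p q p' q' P Q) (wedge P Q) (mixedDet p q P Q) := by
  have hPQ := h.left.right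
  have he₁ := h.outer.triangleExcess_nonneg hPQ.left h.between
  have he₂ := (h.outer.rotate hg).triangleExcess_nonneg hPQ.right h.between_rotate
  have he₃ := ((h.outer.rotate hg).rotate hg).triangleExcess_nonneg hPQ.sub
    h.between_rotate_rotate
  have hdev := abs_le.1 (abs_three_mul_sub_le he₁ he₂ he₃ (Real.sqrt_nonneg _)
    (wedgeSpread_sq (p := p) (q := q) (p' := p') (q' := q')).symm)
  rw [← wedgeSpread, ← wedgeSum, ← excessSum] at hdev
  have hμ := four_mul_mul_mixedDet h.mixedDet_eq
  have hM := four_mul_mul_wedge h.mixedDet_eq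
  refine ⟨h.outer.wedgeSum_nonneg hg, add_nonneg (add_nonneg he₁ he₂) he₃, ?_, ?_, ?_, ?_⟩
  · have := wedgeSpread_radicand_eq p q p' q'
    rw [← sub_nonneg, this]
    positivity
  · have hsq : excessSum p q p' q' P Q ^ 2 ≤ 3 * (triangleExcess p P p' ^ 2 +
        triangleExcess q Q q' ^ 2 + triangleExcess (q - p) (Q - P) (q' - p') ^ 2) := by
      rw [excessSum]
      nlinarith only [sq_nonneg (triangleExcess p P p' - triangleExcess q Q q'),
        sq_nonneg (triangleExcess p P p' - triangleExcess (q - p) (Q - P) (q' - p')),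
        sq_nonneg (triangleExcess q Q q' - triangleExcess (q - p) (Q - P) (q' - p'))]
    linarith
  · linarith
  · linarith

end HalvingBounds

/-! ### Halving twice -/

/-- A gain `t` in area over the wedge sum `S` that halving guarantees for two hexagons with
determinants `D, D'` and mixed determinant `m`, provided that all determinants are at least `1`. -/
structure GainBound (D D' m S t : ℝ) : Prop where
  one_le_left : 1 ≤ D
  one_le_right : 1 ≤ D'
  sum_nonneg : 0 ≤ S
  gain_nonneg : 0 ≤ t
  radicand_nonneg : 12 * (D * D') ≤ 12 * m ^ 2 + S ^ 2
  le : m ≤ 1 → 12 * ((1 - m) ^ 2 - (D - 1) * (D' - 1)) ≤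
    2 * t * (S + 2 * wedgeSpread D D' m S) + t ^ 2

lemma GainBound.symm {D D' m S t : ℝ} (h : GainBound D D' m S t) : GainBound D' D m S t where
  one_le_left := h.one_le_right
  one_le_right := h.one_le_left
  sum_nonneg := h.sum_nonneg
  gain_nonneg := h.gain_nonneg
  radicand_nonneg := by linarith [h.radicand_nonneg]
  le hm := by
    rw [wedgeSpread_comm]
    linarith [h.le hm]

lemma HalvingBounds.gainBound {D D' m S G M μ : ℝ} (h : HalvingBounds D D' m S G M μ)
    (hD : 1 ≤ D) (hD' : 1 ≤ D') (hM : 1 ≤ M) : GainBound D D' m S G where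
  one_le_left := hD
  one_le_right := hD'
  sum_nonneg := h.sum_nonneg
  gain_nonneg := h.excess_nonneg
  radicand_nonneg := h.radicand_nonneg
  le hm := by
    have : 0 ≤ (D + D' - 2 * m) * (M - 1) := mul_nonneg (by linarith) (by linarith)
    linarith [h.wedge_le]

lemma wedgeSpread_nonneg (D D' m S : ℝ) : 0 ≤ wedgeSpread D D' m S := Real.sqrt_nonneg _

lemma GainBound.wedgeSpread_sq_le {D D' m S t ν : ℝ} (h : GainBound D D' m S t) (hm : 0 ≤ m)
    (hν : ν ≤ 1 - m) :
    wedgeSpread D D' m S ^ 2 ≤ S ^ 2 - 12 * (2 * ν - ν ^ 2) := by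
  rw [wedgeSpread, Real.sq_sqrt (by linarith [h.radicand_nonneg])]
  have hDD' : 1 ≤ D * D' := one_le_mul_of_one_le_of_one_le h.one_le_left h.one_le_right
  have hm2 : m ^ 2 ≤ (1 - ν) ^ 2 := by gcongr; linarith
  linarith

lemma four_mul_le_of_le_of_le {R a b Y Z : ℝ} (hR : 0 ≤ R) (ha : 0 ≤ a) (hb : 0 ≤ b) (hY : 0 ≤ Y)
    (hZ : 0 ≤ Z) (h₁ : R ≤ 2 * a * Y + a ^ 2) (h₂ : R ≤ 2 * b * Z + b ^ 2) :
    4 * R ≤ 2 * (a + b) * (Y + Z) + (a + b) ^ 2 := by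
  have hprod : Y * Z + R ≤ (Y + a) * (Z + b) := by
    refine le_of_sq_le_sq ?_ (by positivity)
    calc (Y * Z + R) ^ 2 ≤ (Y ^ 2 + R) * (Z ^ 2 + R) := by
          nlinarith only [mul_nonneg hR (sq_nonneg (Y - Z))]
      _ ≤ (Y + a) ^ 2 * (Z + b) ^ 2 := by gcongr <;> linarith
      _ = ((Y + a) * (Z + b)) ^ 2 := by ring
  linarith

lemma sq_add_le_of_sq_le {k₁ k₂ A B s : ℝ} (hA : 0 ≤ A) (hB : 0 ≤ B) (hs : 0 ≤ s)
    (h₁ : k₁ ^ 2 ≤ A ^ 2 - s) (h₂ : k₂ ^ 2 ≤ B ^ 2 - s) :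
    (k₁ + k₂) ^ 2 ≤ (A + B) ^ 2 - 4 * s := by
  have hsA : s ≤ A ^ 2 := by linarith [sq_nonneg k₁]
  have hsB : s ≤ B ^ 2 := by linarith [sq_nonneg k₂]
  have hsAB : s ≤ A * B := le_of_sq_le_sq (by
    calc s ^ 2 = s * s := sq s
      _ ≤ A ^ 2 * B ^ 2 := by gcongr
      _ = (A * B) ^ 2 := by ring) (by positivity)
  have hprod : k₁ * k₂ ≤ A * B - s := le_of_sq_le_sq (by
    calc (k₁ * k₂) ^ 2 = k₁ ^ 2 * k₂ ^ 2 := by ring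
      _ ≤ (A ^ 2 - s) * (B ^ 2 - s) := by gcongr
      _ ≤ (A * B - s) ^ 2 := by nlinarith only [mul_nonneg hs (sq_nonneg (A - B))])
    (by linarith)
  linarith

section Numeric

variable {D σ g M μ : ℝ}

lemma HalvingBounds.symm {D D' m S G M μ : ℝ} (h : HalvingBounds D D' m S G M μ) :
    HalvingBounds D' D m S G M μ where
  sum_nonneg := h.sum_nonneg
  excess_nonneg := h.excess_nonneg
  radicand_nonneg := by linarith [h.radicand_nonneg]
  wedge_le := by rw [wedgeSpread_comm]; linarith [h.wedge_le]
  mixedDet_le := by rw [wedgeSpread_comm]; linarith [h.mixedDet_le]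
  le_mixedDet := by rw [wedgeSpread_comm]; linarith [h.le_mixedDet]

lemma wedgeSpread_half_sq (hσD : 12 * D ≤ 4 * σ ^ 2) :
    wedgeSpread 1 D (σ / 2) σ ^ 2 = 4 * σ ^ 2 - 12 * D := by
  rw [wedgeSpread, Real.sq_sqrt (by linarith)]
  ring

namespace HalvingBounds

variable (h : HalvingBounds 1 D (σ / 2) σ g M μ) (hD : 1 ≤ D)

-- In the numerical inequalities `hnum` below, the squares vanish near the extremal `σ` and `k`.

include h

lemma spread_sq : wedgeSpread 1 D (σ / 2) σ ^ 2 = 4 * σ ^ 2 - 12 * D :=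
  wedgeSpread_half_sq (by linarith [h.radicand_nonneg])

include hD

lemma sum_ge : 1.732 ≤ σ := by
  nlinarith only [h.radicand_nonneg, h.sum_nonneg, hD]

lemma mixedDet_nonneg (hσ : σ ≤ 1.7855) : 0 ≤ μ := by
  have hσ0 := h.sum_ge hD
  have hk := h.spread_sq
  have hk' : 2 * wedgeSpread 1 D (σ / 2) σ ≤ σ :=
    le_of_sq_le_sq (by nlinarith only [hk, hσ, hσ0, hD]) h.sum_nonneg
  have := h.le_mixedDet
  have hG : 0 ≤ g * (σ - 2 * wedgeSpread 1 D (σ / 2) σ) :=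
    mul_nonneg h.excess_nonneg (by linarith)
  have hD' : 0 ≤ D - (σ / 2) ^ 2 := by nlinarith only [hD, hσ, hσ0]
  refine (mul_nonneg_iff_of_pos_left (show 0 < 12 * (1 + D - σ) by linarith)).1 ?_
  linarith

lemma le_one_sub_mixedDet (hg : σ + g ≤ 1.7855) : 0.0285 ≤ 1 - μ := by
  have hσ0 := h.sum_ge hD
  have hk := h.spread_sq
  have hk0 := wedgeSpread_nonneg 1 D (σ / 2) σ
  have hμ := h.mixedDet_le
  set k := wedgeSpread 1 D (σ / 2) σ
  have hG0 := h.excess_nonneg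
  have hG : g * (σ + 2 * k) ≤ (1.7855 - σ) * (σ + 2 * k) := by gcongr; linarith
  have hσ1 : σ ≤ 1.7855 := by linarith
  have hk1 : k ^ 2 ≤ 4 * σ ^ 2 - 12 := by linarith
  have hnum : 0.0285 * (12 - 12 * σ + 4 * σ ^ 2 - k ^ 2) ≤
      3 * (2 - σ) ^ 2 - (1.7855 - σ) * (σ + 2 * k) := by
    nlinarith only [sq_nonneg (k - 0.45), sq_nonneg (k - 0.45 - 5 * (σ - 1.747)), hσ0, hσ1, hk0,
      hk1]
  refine le_of_mul_le_mul_left ?_ (show 0 < 12 * (1 + D - σ) by linarith)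
  linarith

lemma le_sum_add_excess (hM : 1 ≤ M) : 1.7805 ≤ σ + g := by
  have hσ0 := h.sum_ge hD
  have hk := h.spread_sq
  have hk0 := wedgeSpread_nonneg 1 D (σ / 2) σ
  have hw := h.wedge_le
  set k := wedgeSpread 1 D (σ / 2) σ
  have hG0 := h.excess_nonneg
  by_contra! hlt
  have hG : 2 * g * (σ + 2 * k) + g ^ 2 ≤ 2 * (1.7805 - σ) * (σ + 2 * k) + (1.7805 - σ) ^ 2 := by
    gcongr <;> linarith
  have hσ1 : σ ≤ 1.7855 := by linarith
  have hk1 : k ^ 2 ≤ 4 * σ ^ 2 - 12 := by linarith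
  have hnum : 2 * (1.7805 - σ) * (σ + 2 * k) + (1.7805 - σ) ^ 2 < 3 * (2 - σ) ^ 2 := by
    nlinarith only [sq_nonneg (k - 0.4), sq_nonneg (k - 0.4 - 5 * (σ - 1.745)), hσ0, hσ1, hk0,
      hk1]
  have : 0 ≤ (1 + D - σ) * (M - 1) := mul_nonneg (by linarith) (by linarith)
  linarith

lemma mul_le (hM : 1 ≤ M) (hg : σ + g ≤ 1.7855) : (M - 1) * (D - 1) ≤ 5e-5 := by
  have hσ0 := h.sum_ge hD
  have hk := h.spread_sq
  have hk0 := wedgeSpread_nonneg 1 D (σ / 2) σ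
  have hw := h.wedge_le
  set k := wedgeSpread 1 D (σ / 2) σ
  have hG0 := h.excess_nonneg
  have hG : 2 * g * (σ + 2 * k) + g ^ 2 ≤ 2 * (1.7855 - σ) * (σ + 2 * k) + (1.7855 - σ) ^ 2 := by
    gcongr <;> linarith
  have hσ1 : σ ≤ 1.7855 := by linarith
  have hk1 : k ^ 2 ≤ 4 * σ ^ 2 - 12 := by linarith
  have hnum : 2 * (1.7855 - σ) * (σ + 2 * k) + (1.7855 - σ) ^ 2 +
      0.1 * (4 * σ ^ 2 - 12 - k ^ 2) - 3 * (2 - σ) ^ 2 ≤ 0.02 := by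
    nlinarith only [sq_nonneg (k - 0.37), sq_nonneg (k - 0.37 - 5 * (σ - 1.742)), hσ0, hσ1, hk0,
      hk1]
  have hM' : 12 * (2 - σ) * (M - 1) ≤ 0.02 - 1.2 * (D - 1) := by
    have : 12 * (2 - σ) * (M - 1) ≤ 12 * (1 + D - σ) * (M - 1) := by
      gcongr (?_ * ?_) * ?_
      linarith
    linarith
  have hMD : 2.574 * (M - 1) * (D - 1) ≤ (0.02 - 1.2 * (D - 1)) * (D - 1) := by
    refine mul_le_mul_of_nonneg_right (le_trans ?_ hM') (by linarith)
    exact mul_le_mul_of_nonneg_right (by linarith) (by linarith)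
  nlinarith only [hMD, sq_nonneg (D - 1 - 1 / 120)]

end HalvingBounds

/-- `S` and `T` are the wedge sums of the two halves, `a` and `b` the gains from halving them again;
`1.7855` is half of the area `3.571` to be reached. -/
theorem HalvingBounds.le_sum_add_gains {S T a b : ℝ} (h : HalvingBounds 1 D (σ / 2) σ g M μ)
    (hST : S + T = σ + g) (ha : GainBound 1 M μ S a) (hb : GainBound M D μ T b) :
    1.7855 ≤ σ + g + a + b := by
  by_contra! hlt
  have hD := hb.one_le_right
  have hM := ha.one_le_right
  have ha0 := ha.gain_nonneg
  have hb0 := hb.gain_nonneg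
  have hμ := h.le_one_sub_mixedDet hD (by linarith)
  have hμ0 := h.mixedDet_nonneg hD (by linarith [h.excess_nonneg])
  have hab := h.le_sum_add_excess hD hM
  have hδ := h.mul_le hD hM (by linarith)
  have hka := ha.wedgeSpread_sq_le hμ0 hμ
  have hkb := hb.wedgeSpread_sq_le hμ0 hμ
  have hS := ha.sum_nonneg
  have hT := hb.sum_nonneg
  have hspread := sq_add_le_of_sq_le hS hT (by norm_num) hka hkb
  have ha1 := ha.le (by linarith)
  have hb1 := hb.le (by linarith)
  have hka0 := wedgeSpread_nonneg 1 M μ S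
  have hkb0 := wedgeSpread_nonneg M D μ T
  set k := wedgeSpread 1 M μ S
  set l := wedgeSpread M D μ T
  have hkl : k + l ≤ 0.71 := by
    refine le_of_sq_le_sq (hspread.trans ?_) (by norm_num)
    rw [hST]
    nlinarith only [hlt, hab, ha0, hb0]
  have hμ2 : 0.0285 ^ 2 ≤ (1 - μ) ^ 2 := by gcongr
  have hgain := four_mul_le_of_le_of_le (R := 12 * (0.0285 ^ 2 - 5e-5)) (by norm_num) ha0 hb0
    (by positivity : 0 ≤ S + 2 * k) (by positivity : 0 ≤ T + 2 * l) (by linarith) (by linarith)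
  have : 2 * (a + b) * (S + 2 * k + (T + 2 * l)) + (a + b) ^ 2 ≤
      2 * 0.005 * (1.7855 + 2 * 0.71) + 0.005 ^ 2 := by
    gcongr ?_ * ?_ * ?_ + ?_ ^ _ <;> linarith
  norm_num at this hgain
  linarith

end Numeric

/-! ### Areas of sectors of the unit disc -/

/-- The linear map with columns `A` and `B`. -/
noncomputable def columnMap (A B : ℝ × ℝ) : ℝ × ℝ →ₗ[ℝ] ℝ × ℝ :=
  Matrix.toLin (Module.Basis.finTwoProd ℝ) (Module.Basis.finTwoProd ℝ) !![A.1, B.1; A.2, B.2]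

lemma columnMap_apply (A B x : ℝ × ℝ) : columnMap A B x = x.1 • A + x.2 • B := by
  rw [columnMap, Matrix.toLin_finTwoProd_apply]
  ext <;> simp [mul_comm]

lemma det_columnMap (A B : ℝ × ℝ) : LinearMap.det (columnMap A B) = wedge A B := by
  rw [columnMap, LinearMap.det_toLin, Matrix.det_fin_two_of, wedge]
  ring

lemma volume_columnMap_image (A B : ℝ × ℝ) (s : Set (ℝ × ℝ)) :
    volume (columnMap A B '' s) = ENNReal.ofReal |wedge A B| * volume s := by
  rw [Measure.addHaar_image_linearMap, det_columnMap]

lemma volume_triangle :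
    volume (regionBetween (fun _ : ℝ ↦ (0 : ℝ)) (fun a ↦ 1 - a) (Set.Ioo 0 1)) =
      ENNReal.ofReal (1 / 2) := by
  have hint : ∫ y in Set.Ioo (0 : ℝ) 1, (1 - y) = 1 / 2 := by
    rw [← integral_Ioc_eq_integral_Ioo, ← intervalIntegral.integral_of_le zero_le_one,
      intervalIntegral.integral_sub (by simp) (by simp), integral_id]
    norm_num
  rw [Measure.volume_eq_prod, volume_regionBetween_eq_integral (integrableOn_const (by simp))
    ((Continuous.integrableOn_Icc (by fun_prop)).mono_set Set.Ioo_subset_Icc_self)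
    measurableSet_Ioo fun x hx ↦ by simpa using hx.2.le, ← hint]
  simp

/-- The open sector between the rays through `A` and `B`. -/
def sector (A B : ℝ × ℝ) : Set (ℝ × ℝ) := {x | 0 < wedge A x ∧ 0 < wedge x B}

/-- The area of the part of the unit disc of `g` in the sector between `A` and `B`. -/
noncomputable def sectorArea (g : Seminorm ℝ (ℝ × ℝ)) (A B : ℝ × ℝ) : ℝ :=
  volume.real (g.closedBall 0 1 ∩ sector A B)

lemma isOpen_sector (A B : ℝ × ℝ) : IsOpen (sector A B) := by
  have hA : Continuous fun x ↦ wedge A x := by unfold wedge; fun_prop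
  have hB : Continuous fun x ↦ wedge x B := by unfold wedge; fun_prop
  exact (isOpen_lt continuous_const hA).inter (isOpen_lt continuous_const hB)

section SectorArea

variable {g : Seminorm ℝ (ℝ × ℝ)} {A B M p q p' q' P Q : ℝ × ℝ}

lemma IsDefinite.measurableSet_closedBall_inter_sector (hg : IsDefinite g) (A B : ℝ × ℝ) :
    MeasurableSet (g.closedBall 0 1 ∩ sector A B) :=
  (hg.isCompact_closedBall 1).measurableSet.inter (isOpen_sector A B).measurableSet

lemma IsDefinite.volume_ne_top_of_subset (hg : IsDefinite g) {s : Set (ℝ × ℝ)}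
    (hs : s ⊆ g.closedBall 0 1) : volume s ≠ ⊤ :=
  measure_ne_top_of_subset hs (hg.isCompact_closedBall 1).measure_ne_top

lemma disjoint_sector (A M B : ℝ × ℝ) : Disjoint (sector A M) (sector M B) := by
  rw [Set.disjoint_left]
  rintro x ⟨-, h⟩ ⟨h', -⟩
  rw [wedge_swap] at h'
  linarith

lemma sector_union_subset (hM : MemCone A B M) : sector A M ∪ sector M B ⊆ sector A B := by
  obtain ⟨α, β, hα, hβ, rfl⟩ := hM
  rintro x (⟨hA, hx⟩ | ⟨hx, hB⟩)
  · refine ⟨hA, pos_of_mul_pos_right (a := β) ?_ hβ⟩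
    simp only [wedge_add_right, wedge_smul_right, wedge_swap A x] at hx
    linarith [mul_nonneg hα hA.le]
  · refine ⟨pos_of_mul_pos_right (a := α) ?_ hα, hB⟩
    simp only [wedge_add_left, wedge_smul_left, wedge_swap x B] at hx
    linarith [mul_nonneg hβ hB.le]

lemma IsDefinite.sectorArea_add_eq (hg : IsDefinite g) (A M B : ℝ × ℝ) :
    sectorArea g A M + sectorArea g M B =
      volume.real (g.closedBall 0 1 ∩ (sector A M ∪ sector M B)) := by
  rw [Set.inter_union_distrib_left, measureReal_union
    ((disjoint_sector A M B).mono Set.inter_subset_right Set.inter_subset_right)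
    (hg.measurableSet_closedBall_inter_sector M B)
    (hg.volume_ne_top_of_subset Set.inter_subset_left)
    (hg.volume_ne_top_of_subset Set.inter_subset_left), sectorArea, sectorArea]

lemma IsDefinite.sectorArea_add_le (hg : IsDefinite g) (hM : MemCone A B M) :
    sectorArea g A M + sectorArea g M B ≤ sectorArea g A B := by
  rw [hg.sectorArea_add_eq]
  exact measureReal_mono (Set.inter_subset_inter_right _ (sector_union_subset hM))
    (hg.volume_ne_top_of_subset Set.inter_subset_left)

lemma IsDefinite.wedge_div_two_le_sectorArea (hg : IsDefinite g) (hA : g A ≤ 1) (hB : g B ≤ 1)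
    (hAB : 0 ≤ wedge A B) : wedge A B / 2 ≤ sectorArea g A B := by
  rcases hAB.eq_or_lt with h | h
  · rw [← h, zero_div]
    exact measureReal_nonneg
  have hsub : columnMap A B '' regionBetween (fun _ : ℝ ↦ (0 : ℝ)) (fun a ↦ 1 - a) (Set.Ioo 0 1) ⊆
      g.closedBall 0 1 ∩ sector A B := by
    rintro _ ⟨⟨a, b⟩, ⟨⟨ha0 : 0 < a, -⟩, hb0 : 0 < b, hb1 : b < 1 - a⟩, rfl⟩
    rw [columnMap_apply]
    refine ⟨?_, by simpa using mul_pos hb0 h, by simpa using mul_pos ha0 h⟩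
    rw [Seminorm.mem_closedBall_zero]
    calc g (a • A + b • B) ≤ a * g A + b * g B := seminorm_smul_add_smul_le g ha0.le hb0.le A B
      _ ≤ a * 1 + b * 1 := by gcongr
      _ ≤ 1 := by linarith
  have hvol := measureReal_mono (μ := volume) hsub
    (hg.volume_ne_top_of_subset Set.inter_subset_left)
  rw [measureReal_def, volume_columnMap_image, volume_triangle, abs_of_pos h,
    ← ENNReal.ofReal_mul h.le, ENNReal.toReal_ofReal (by positivity)] at hvol
  rw [sectorArea]
  linarith

lemma IsDefinite.two_mul_sectorArea_le (hg : IsDefinite g) (p q : ℝ × ℝ) :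
    2 * (sectorArea g p q + sectorArea g q (-p)) ≤ volume.real (g.closedBall 0 1) := by
  set H := g.closedBall 0 1 ∩ (sector p q ∪ sector q (-p))
  have hHm : MeasurableSet H := (hg.isCompact_closedBall 1).measurableSet.inter
    ((isOpen_sector _ _).union (isOpen_sector _ _)).measurableSet
  have hpos : ∀ x ∈ H, 0 < wedge p x := by
    rintro x ⟨-, h | h⟩
    · exact h.1
    · simpa [wedge_swap p x] using h.2
  have hdisj : Disjoint H (-H) := by
    rw [Set.disjoint_left]
    intro x hx hx'
    have h := hpos _ hx'
    rw [wedge_neg_right] at h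
    linarith [hpos x hx]
  have hneg : -H ⊆ g.closedBall 0 1 := by
    rintro x ⟨hx, -⟩
    simpa only [Seminorm.mem_closedBall_zero, map_neg_eq_map] using hx
  calc 2 * (sectorArea g p q + sectorArea g q (-p)) = volume.real H + volume.real (-H) := by
        rw [hg.sectorArea_add_eq, measureReal_def (s := -H), Measure.measure_neg,
          ← measureReal_def]
        ring
    _ = volume.real (H ∪ -H) := (measureReal_union hdisj hHm.neg
        (hg.volume_ne_top_of_subset Set.inter_subset_left) (hg.volume_ne_top_of_subset hneg)).symm
    _ ≤ _ := measureReal_mono (Set.union_subset Set.inter_subset_left hneg)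
        (hg.volume_ne_top_of_subset subset_rfl)

/-- The area of the six sectors of the unit disc between corresponding vertices of the hexagons of
`(p, q)` and `(p', q')`. -/
noncomputable def sixSectorArea (g : Seminorm ℝ (ℝ × ℝ)) (p q p' q' : ℝ × ℝ) : ℝ :=
  2 * (sectorArea g p p' + sectorArea g q q' + sectorArea g (q - p) (q' - p'))

lemma ConsecutiveHexagons.wedgeSum_le_sixSectorArea (hg : IsStrictNorm g)
    (h : ConsecutiveHexagons g p q p' q') : wedgeSum p q p' q' ≤ sixSectorArea g p q p' q' := by
  have hle {p q p' q'} (h : ConsecutiveHexagons g p q p' q') :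
      wedge p p' / 2 ≤ sectorArea g p p' :=
    hg.definite.wedge_div_two_le_sectorArea h.left.left.le h.right.left.le h.wedge_nonneg
  rw [wedgeSum, sixSectorArea]
  linarith [hle h, hle (h.rotate hg), hle ((h.rotate hg).rotate hg)]

lemma IsHalving.sixSectorArea_add_le (hg : IsStrictNorm g) (h : IsHalving g p q p' q' P Q) :
    sixSectorArea g p q P Q + sixSectorArea g P Q p' q' ≤ sixSectorArea g p q p' q' := by
  simp only [sixSectorArea]
  linarith [hg.definite.sectorArea_add_le h.between, hg.definite.sectorArea_add_le h.between_rotate,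
    hg.definite.sectorArea_add_le h.between_rotate_rotate]

lemma sixSectorArea_rotate_le (hg : IsDefinite g) (p q : ℝ × ℝ) :
    sixSectorArea g p q q (q - p) ≤ volume.real (g.closedBall 0 1) := by
  have hcone : MemCone q (-p) (q - p) := ⟨1, 1, zero_le_one, zero_le_one, by module⟩
  rw [sixSectorArea, sub_sub_cancel_left]
  linarith [hg.sectorArea_add_le hcone, hg.two_mul_sectorArea_le p q]

end SectorArea

/-! ### The area of the unit disc relative to its smallest inscribed hexagon -/

section PlanarArea

variable {g : Seminorm ℝ (ℝ × ℝ)} {p q p' q' : ℝ × ℝ}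

lemma exists_gainBound (hg : IsStrictNorm g) (hmin : ∀ p q, UnitHexagon g p q → 1 ≤ wedge p q)
    (h : ConsecutiveHexagons g p q p' q') :
    ∃ t, GainBound (wedge p q) (wedge p' q') (mixedDet p q p' q') (wedgeSum p q p' q') t ∧
      wedgeSum p q p' q' + t ≤ sixSectorArea g p q p' q' := by
  have hD := hmin _ _ h.left
  have hD' := hmin _ _ h.right
  rcases le_or_gt (mixedDet p q p' q') 1 with hm | hm
  · obtain ⟨P, Q, hPQ⟩ := exists_isHalving hg h (hm.trans hD) (hm.trans hD')
    refine ⟨_, (hPQ.halvingBounds hg).gainBound hD hD' (hmin _ _ hPQ.left.right), ?_⟩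
    rw [← wedgeSum_add_wedgeSum]
    linarith [hPQ.left.wedgeSum_le_sixSectorArea hg, hPQ.right.wedgeSum_le_sixSectorArea hg,
      hPQ.sixSectorArea_add_le hg]
  · refine ⟨0, ⟨hD, hD', h.wedgeSum_nonneg hg, le_rfl, ?_, fun h1 ↦ absurd h1 hm.not_ge⟩, ?_⟩
    · rw [← sub_nonneg, wedgeSpread_radicand_eq]
      positivity
    · simpa only [add_zero] using h.wedgeSum_le_sixSectorArea hg

lemma ConsecutiveHexagons.le_sixSectorArea (hg : IsStrictNorm g)
    (hmin : ∀ p q, UnitHexagon g p q → 1 ≤ wedge p q) (h : ConsecutiveHexagons g p q p' q')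
    (hm : mixedDet p q p' q' = wedgeSum p q p' q' / 2)
    (hone : wedge p q = 1 ∨ wedge p' q' = 1) : 1.7855 ≤ sixSectorArea g p q p' q' := by
  rcases le_or_gt (wedgeSum p q p' q') 2 with hσ | hσ
  · have hD := hmin _ _ h.left
    have hD' := hmin _ _ h.right
    obtain ⟨P, Q, hPQ⟩ := exists_isHalving hg h (by linarith) (by linarith)
    obtain ⟨a, ha, haA⟩ := exists_gainBound hg hmin hPQ.left
    obtain ⟨b, hb, hbA⟩ := exists_gainBound hg hmin hPQ.right
    have hsum := wedgeSum_add_wedgeSum p q p' q' P Q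
    have hbounds := hPQ.halvingBounds hg
    rw [mixedDet_comm P Q, hPQ.mixedDet_eq] at hb
    rw [hm] at hbounds
    have := hPQ.sixSectorArea_add_le hg
    rcases hone with h1 | h1 <;> rw [h1] at hbounds
    · rw [h1] at ha
      linarith [hbounds.le_sum_add_gains hsum ha hb]
    · rw [h1] at hb
      linarith [hbounds.symm.le_sum_add_gains ((add_comm _ _).trans hsum) hb.symm ha.symm]
  · linarith [h.wedgeSum_le_sixSectorArea hg]

theorem le_area_closedBall (hg : IsStrictNorm g)
    (hmin : ∀ p q, UnitHexagon g p q → 1 ≤ wedge p q) (h : UnitHexagon g p q)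
    (hpq : wedge p q = 1) : 3.571 ≤ volume.real (g.closedBall 0 1) := by
  have hrot : ConsecutiveHexagons g p q q (q - p) := ⟨h, h.rotate, memCone_right p q⟩
  have hpq' : wedge q (q - p) = 1 := by rw [← hpq]; simp [wedge_swap p q]
  obtain ⟨P, Q, hPQ⟩ : ∃ P Q, IsHalving g p q q (q - p) P Q := by
    apply exists_isHalving hg hrot <;> simp [mixedDet, hpq, hpq'] <;> norm_num
  have heq : wedge p P + wedge q Q = wedge p Q := by
    have := hPQ.mixedDet_eq
    simp only [mixedDet, wedge_sub_right, wedge_swap q P, wedge_swap p P] at this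
    linarith
  have hleft : mixedDet p q P Q = wedgeSum p q P Q / 2 := by
    simp only [mixedDet, wedgeSum, wedge_sub_left, wedge_sub_right, wedge_swap q P]
    linarith
  have hright : mixedDet P Q q (q - p) = wedgeSum P Q q (q - p) / 2 := by
    simp only [mixedDet, wedgeSum, wedge_sub_left, wedge_sub_right, wedge_swap q, wedge_swap p P,
      wedge_swap p Q]
    linarith
  linarith [hPQ.left.le_sixSectorArea hg hmin hleft (.inl hpq),
    hPQ.right.le_sixSectorArea hg hmin hright (.inr hpq'), hPQ.sixSectorArea_add_le hg,
    sixSectorArea_rotate_le hg.definite p q]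

end PlanarArea

/-! ### Planar sets whose integer translates cover the plane -/

lemma measure_fundamentalDomain_le_of_covering {G α : Type*} [AddGroup G] [Countable G]
    [AddAction G α] [MeasurableSpace α] {μ : Measure α} [MeasurableConstVAdd G α]
    [VAddInvariantMeasure G α μ] {F L : Set α} (hF : IsAddFundamentalDomain G F μ)
    (hL : ∀ x, ∃ g : G, g +ᵥ x ∈ L) : μ F ≤ μ L := by
  have hsub : F ⊆ ⋃ g : G, (g +ᵥ L) ∩ F := fun x hx ↦ by
    obtain ⟨g, hg⟩ := hL x
    exact Set.mem_iUnion.2 ⟨-g, Set.mem_neg_vadd_set_iff.2 hg, hx⟩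
  calc μ F ≤ ∑' g : G, μ ((g +ᵥ L) ∩ F) := (measure_mono hsub).trans (measure_iUnion_le _)
    _ = μ L := (hF.measure_eq_tsum L).symm

/-- The translates of `L` by integer vectors cover the plane. -/
def IsIntegerCovering (L : Set (ℝ × ℝ)) : Prop :=
  ∀ x : ℝ × ℝ, ∃ m n : ℤ, x + ((m : ℝ), (n : ℝ)) ∈ L

lemma IsIntegerCovering.one_le_volume {L : Set (ℝ × ℝ)} (hL : IsIntegerCovering L) :
    1 ≤ volume L := by
  let b := Module.Basis.finTwoProd ℝ
  have hb : volume (ZSpan.fundamentalDomain b) = 1 := by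
    have : ZSpan.fundamentalDomain b = Set.Ico 0 1 ×ˢ Set.Ico 0 1 := by
      ext x
      simp [b, ZSpan.mem_fundamentalDomain, Fin.forall_fin_two]
    rw [this, Measure.volume_eq_prod, Measure.prod_prod]
    simp
  rw [← hb]
  have : Countable (Submodule.span ℤ (Set.range b)).toAddSubgroup :=
    inferInstanceAs (Countable (Submodule.span ℤ (Set.range b)))
  refine measure_fundamentalDomain_le_of_covering (ZSpan.isAddFundamentalDomain' b volume)
    fun x ↦ ?_
  obtain ⟨m, n, h⟩ := hL x
  refine ⟨⟨m • b 0 + n • b 1, ?_⟩, ?_⟩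
  · exact add_mem (zsmul_mem (Submodule.subset_span (Set.mem_range_self 0)) m)
      (zsmul_mem (Submodule.subset_span (Set.mem_range_self 1)) n)
  · convert h using 1
    rw [AddSubgroup.vadd_def, vadd_eq_add, add_comm]
    ext <;> simp [b]

lemma one_le_of_forall_exists_add_int_mem_Icc {a b : ℝ}
    (h : ∀ x : ℝ, ∃ m : ℤ, x + m ∈ Set.Icc a b) : 1 ≤ b - a := by
  by_contra! hlt
  obtain ⟨m, h1, h2⟩ := h ((a + b + 1) / 2)
  have hm : m < 0 := by
    have : (m : ℝ) < 0 := by linarith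
    exact_mod_cast this
  have hm' : -1 < m := by
    have : (-1 : ℝ) < m := by linarith
    exact_mod_cast this
  omega

lemma eq_zero_of_add_int_mem_Icc {a b x : ℝ} {m : ℤ} (hx : x ∈ Set.Ioo (b - 1) (a + 1))
    (h : x + m ∈ Set.Icc a b) : m = 0 := by
  have hm : m < 1 := by
    have : (m : ℝ) < 1 := by linarith [hx.1, h.2]
    exact_mod_cast this
  have hm' : -1 < m := by
    have : (-1 : ℝ) < m := by linarith [hx.2, h.1]
    exact_mod_cast this
  omega

lemma IsIntegerCovering.four_le_widths {L : Set (ℝ × ℝ)} (hL : IsIntegerCovering L)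
    {a₁ b₁ a₂ b₂ a₃ b₃ : ℝ} (h₁ : ∀ x ∈ L, x.1 ∈ Set.Icc a₁ b₁) (h₂ : ∀ x ∈ L, x.2 ∈ Set.Icc a₂ b₂)
    (h₃ : ∀ x ∈ L, x.1 + x.2 ∈ Set.Icc a₃ b₃) : 4 ≤ (b₁ - a₁) + (b₂ - a₂) + (b₃ - a₃) := by
  have hw₁ : 1 ≤ b₁ - a₁ := one_le_of_forall_exists_add_int_mem_Icc fun x ↦ by
    obtain ⟨m, n, h⟩ := hL (x, 0)
    exact ⟨m, h₁ _ h⟩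
  have hw₂ : 1 ≤ b₂ - a₂ := one_le_of_forall_exists_add_int_mem_Icc fun x ↦ by
    obtain ⟨m, n, h⟩ := hL (0, x)
    exact ⟨n, h₂ _ h⟩
  have hw₃ : 1 ≤ b₃ - a₃ := one_le_of_forall_exists_add_int_mem_Icc fun x ↦ by
    obtain ⟨m, n, h⟩ := hL (x, 0)
    refine ⟨m + n, ?_⟩
    have := h₃ _ h
    rwa [Prod.mk_add_mk, zero_add, add_assoc, ← Int.cast_add] at this
  by_contra! hlt
  -- A point of this box has no other integer translate in `L`, so it lies in `L` itself.
  have hbox : ∀ x ∈ Set.Ioo (b₁ - 1) (a₁ + 1), ∀ y ∈ Set.Ioo (b₂ - 1) (a₂ + 1),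
      x + y ∈ Set.Icc a₃ b₃ := by
    intro x hx y hy
    obtain ⟨m, n, h⟩ := hL (x, y)
    obtain rfl : m = 0 := eq_zero_of_add_int_mem_Icc hx (h₁ _ h)
    obtain rfl : n = 0 := eq_zero_of_add_int_mem_Icc hy (h₂ _ h)
    simpa using h₃ _ h
  obtain ⟨ε, hε, hε'⟩ : ∃ ε > 0, 4 * ε < 4 - ((b₁ - a₁) + (b₂ - a₂) + (b₃ - a₃)) :=
    ⟨(4 - ((b₁ - a₁) + (b₂ - a₂) + (b₃ - a₃))) / 5, by linarith, by linarith⟩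
  have hlow := hbox (b₁ - 1 + ε) ⟨by linarith, by linarith⟩ (b₂ - 1 + ε) ⟨by linarith, by linarith⟩
  have hhigh := hbox (a₁ + 1 - ε) ⟨by linarith, by linarith⟩ (a₂ + 1 - ε) ⟨by linarith, by linarith⟩
  linarith [hlow.1, hhigh.2]

/-! ### Minkowski sums with segments -/

section CenteredSegment

variable {E F : Type*} [AddCommGroup E] [Module ℝ E] [AddCommGroup F] [Module ℝ F]

/-- The segment from `-(a / 2) • d` to `(a / 2) • d`. -/
def centeredSegment (a : ℝ) (d : E) : Set E := (· • d) '' Set.Icc (-(a / 2)) (a / 2)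

lemma half_smul_mem_centeredSegment {a : ℝ} (ha : 0 ≤ a) (d : E) :
    (a / 2) • d ∈ centeredSegment a d :=
  ⟨a / 2, ⟨by linarith, le_rfl⟩, rfl⟩

lemma neg_half_smul_mem_centeredSegment {a : ℝ} (ha : 0 ≤ a) (d : E) :
    -((a / 2) • d) ∈ centeredSegment a d :=
  ⟨-(a / 2), ⟨le_rfl, by linarith⟩, neg_smul _ _⟩

lemma subset_add_centeredSegment {a : ℝ} (ha : 0 ≤ a) (d : E) (M : Set E) :
    M ⊆ M + centeredSegment a d :=
  Set.subset_add_left M ⟨0, ⟨by linarith, by linarith⟩, zero_smul ℝ d⟩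

lemma convex_centeredSegment (a : ℝ) (d : E) : Convex ℝ (centeredSegment a d) :=
  (convex_Icc _ _).linear_image (LinearMap.toSpanSingleton ℝ E d)

lemma isCompact_centeredSegment [TopologicalSpace E] [ContinuousSMul ℝ E] (a : ℝ) (d : E) :
    IsCompact (centeredSegment a d) :=
  isCompact_Icc.image (by fun_prop)

lemma image_centeredSegment (f : E →ₗ[ℝ] F) (a : ℝ) (d : E) :
    f '' centeredSegment a d = centeredSegment a (f d) := by
  simp only [centeredSegment, Set.image_image, map_smul]

end CenteredSegment

lemma volume_add_ofReal_le_volume_add_Icc {A : Set ℝ} (hA : IsCompact A) (hne : A.Nonempty)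
    {s t : ℝ} (hst : s ≤ t) : volume A + ENNReal.ofReal (t - s) ≤ volume (A + Set.Icc s t) := by
  obtain ⟨b, hb, hmax⟩ := hA.exists_isGreatest hne
  have hdisj : Disjoint (s +ᵥ A) (Set.Ioc (s + b) (t + b)) := by
    rw [Set.disjoint_left]
    rintro _ ⟨x, hx, rfl⟩ ⟨h, -⟩
    exact (add_lt_add_iff_left s).1 h |>.not_ge (hmax hx)
  calc volume A + ENNReal.ofReal (t - s) = volume (s +ᵥ A) + volume (Set.Ioc (s + b) (t + b)) := by
        rw [measure_vadd, Real.volume_Ioc, add_sub_add_right_eq_sub]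
    _ = volume ((s +ᵥ A) ∪ Set.Ioc (s + b) (t + b)) := (measure_union hdisj measurableSet_Ioc).symm
    _ ≤ _ := by
      refine measure_mono (Set.union_subset ?_ fun x hx ↦ ?_)
      · rintro _ ⟨x, hx, rfl⟩
        exact ⟨x, hx, s, ⟨le_rfl, hst⟩, add_comm _ _⟩
      · exact ⟨b, hb, x - b, ⟨by linarith [hx.1], by linarith [hx.2]⟩, by simp⟩

section Segments

variable {M : Set (ℝ × ℝ)} {u v : ℝ × ℝ} {a : ℝ}

lemma volume_add_indicator_le_volume_slice (hM : IsCompact M) (hc : Convex ℝ M) (hu : u ∈ M)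
    (hv : v ∈ M) (ha : 0 ≤ a) (y : ℝ) :
    volume ((fun x ↦ (x, y)) ⁻¹' M) +
        (Set.Icc u.2 v.2).indicator (fun _ ↦ ENNReal.ofReal a) y ≤
      volume ((fun x ↦ (x, y)) ⁻¹' (M + centeredSegment a ((1, 0) : ℝ × ℝ))) := by
  by_cases hy : y ∈ Set.Icc u.2 v.2
  · have hne : ((fun x : ℝ ↦ (x, y)) ⁻¹' M).Nonempty := by
      have hsnd : Convex ℝ (Prod.snd '' M) := hc.linear_image (LinearMap.snd ℝ ℝ ℝ)
      obtain ⟨z, hz, rfl⟩ := hsnd.ordConnected.out ⟨u, hu, rfl⟩ ⟨v, hv, rfl⟩ hy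
      exact ⟨z.1, hz⟩
    have hcomp : IsCompact ((fun x : ℝ ↦ (x, y)) ⁻¹' M) :=
      (hM.image continuous_fst).of_isClosed_subset (hM.isClosed.preimage (by fun_prop))
        fun x hx ↦ ⟨_, hx, rfl⟩
    rw [Set.indicator_of_mem hy]
    calc volume ((fun x ↦ (x, y)) ⁻¹' M) + ENNReal.ofReal a
        = volume ((fun x ↦ (x, y)) ⁻¹' M) + ENNReal.ofReal (a / 2 - -(a / 2)) := by
          rw [sub_neg_eq_add, add_halves]
      _ ≤ volume ((fun x ↦ (x, y)) ⁻¹' M + Set.Icc (-(a / 2)) (a / 2)) :=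
          volume_add_ofReal_le_volume_add_Icc hcomp hne (by linarith)
      _ ≤ _ := by
          refine measure_mono ?_
          rintro _ ⟨x, hx, τ, hτ, rfl⟩
          exact ⟨(x, y), hx, τ • (1, 0), ⟨τ, hτ, rfl⟩, by simp⟩
  · rw [Set.indicator_of_notMem hy, add_zero]
    exact measure_mono (Set.preimage_mono (subset_add_centeredSegment ha _ M))

lemma volume_add_le_volume_add_horizontal (hM : IsCompact M) (hc : Convex ℝ M) (hu : u ∈ M)
    (hv : v ∈ M) (ha : 0 ≤ a) :
    volume M + ENNReal.ofReal (a * (v.2 - u.2)) ≤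
      volume (M + centeredSegment a ((1, 0) : ℝ × ℝ)) := by
  have hM' := hM.add (isCompact_centeredSegment a ((1, 0) : ℝ × ℝ))
  rw [Measure.volume_eq_prod, Measure.prod_apply_symm hM.measurableSet,
    Measure.prod_apply_symm hM'.measurableSet, ENNReal.ofReal_mul ha, ← Real.volume_Icc,
    ← setLIntegral_const, ← lintegral_indicator measurableSet_Icc,
    ← lintegral_add_right _ (measurable_const.indicator measurableSet_Icc)]
  exact lintegral_mono (volume_add_indicator_le_volume_slice hM hc hu hv ha)

lemma volume_add_le_volume_add_centeredSegment (hM : IsCompact M) (hc : Convex ℝ M) (hu : u ∈ M)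
    (hv : v ∈ M) (ha : 0 ≤ a) (d : ℝ × ℝ) :
    volume M + ENNReal.ofReal (a * wedge d (v - u)) ≤ volume (M + centeredSegment a d) := by
  rcases eq_or_ne d 0 with rfl | hd
  · simpa using measure_mono (subset_add_centeredSegment ha 0 M)
  obtain ⟨e, he⟩ : ∃ e, wedge d e = 1 := by
    obtain ⟨w, hw⟩ := exists_wedge_pos hd
    exact ⟨(wedge d w)⁻¹ • w, by simp [hw.ne']⟩
  -- the unimodular map taking `d` to `(1, 0)` and `e` to `(0, 1)`
  set f := columnMap (e.2, -d.2) (-e.1, d.1) with hf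
  have hfx (x : ℝ × ℝ) : f x = (wedge x e, wedge d x) := by
    rw [hf, columnMap_apply]
    ext <;> simp [wedge] <;> ring
  have hfd : f d = (1, 0) := by rw [hfx, he, wedge_self]
  have hvol (s : Set (ℝ × ℝ)) : volume (f '' s) = volume s := by
    have hdet : wedge (e.2, -d.2) (-e.1, d.1) = 1 := by
      rw [← he]
      simp only [wedge]
      ring
    rw [hf, volume_columnMap_image, hdet, abs_one, ENNReal.ofReal_one, one_mul]
  have key := volume_add_le_volume_add_horizontal (hM.image f.continuous_of_finiteDimensional)
    (hc.linear_image f) (Set.mem_image_of_mem f hu) (Set.mem_image_of_mem f hv) ha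
  rwa [← hfd, ← image_centeredSegment, ← Set.image_add, hvol, hvol, hfx, hfx,
    ← wedge_sub_right] at key

end Segments

/-! ### Caps -/

section Caps

variable {E ι : Type*} [NormedAddCommGroup E] [NormedSpace ℝ E] {φ : ι → E →L[ℝ] ℝ}
  {K L W : Set E} {a c : ℝ}

/-- The part of `K` cut off by the hyperplane `f = 1`. -/
def cap (K : Set E) (f : E →L[ℝ] ℝ) : Set E := K ∩ {x | 1 < f x}

/-- The polyhedron on which all functionals `φ i` are at most one. -/
def polyhedron (φ : ι → E →L[ℝ] ℝ) : Set E := {x | ∀ i, φ i x ≤ 1}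

lemma pairwise_disjoint_vadd_smul_cap (ha : 0 < a) (hc : 0 ≤ c)
    (hcap : ∀ x ∈ K, ∀ i j, 1 < φ i x → 1 < φ j x → i = j) {y : ι → E} (hy : ∀ i, y i ∈ L)
    (hmax : ∀ i, ∀ x ∈ L, φ i x ≤ φ i (y i)) :
    Pairwise (Function.onFun Disjoint fun i ↦ c • y i +ᵥ a • cap K (φ i)) := by
  intro i j hij
  rw [Function.onFun, Set.disjoint_left]
  rintro _ ⟨_, ⟨x, hx, rfl⟩, rfl⟩ ⟨_, ⟨z, hz, rfl⟩, h⟩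
  have hxj : φ j x ≤ 1 := not_lt.1 fun h ↦ hij (hcap x hx.1 i j hx.2 h)
  have hzj : 1 < φ j z := hz.2
  have heq : c * φ j (y j) + a * φ j z = c * φ j (y i) + a * φ j x := by
    simpa using congrArg (φ j) h
  have h1 := mul_le_mul_of_nonneg_left (hmax j _ (hy i)) hc
  have h2 := mul_lt_mul_of_pos_left (hxj.trans_lt hzj) ha
  linarith

lemma disjoint_iUnion_vadd_smul_cap (ha : 0 < a) (hc : 0 ≤ c) {y : ι → E}
    (hmax : ∀ i, ∀ x ∈ L, φ i x ≤ φ i (y i)) :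
    Disjoint (a • polyhedron φ + c • L) (⋃ i, c • y i +ᵥ a • cap K (φ i)) := by
  rw [Set.disjoint_iUnion_right]
  intro i
  rw [Set.disjoint_left]
  rintro _ ⟨_, ⟨x, hx, rfl⟩, _, ⟨w, hw, rfl⟩, rfl⟩ ⟨_, ⟨z, hz, rfl⟩, h⟩
  have hzi : 1 < φ i z := hz.2
  have heq : c * φ i (y i) + a * φ i z = a * φ i x + c * φ i w := by
    simpa using congrArg (φ i) h
  have h1 := mul_le_mul_of_nonneg_left (hmax i _ hw) hc
  have h2 := mul_lt_mul_of_pos_left ((hx i).trans_lt hzi) ha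
  linarith

variable [MeasurableSpace E]

lemma measure_sub_le_tsum_cap [Countable ι] (μ : Measure E) (φ : ι → E →L[ℝ] ℝ) (K : Set E) :
    μ K - μ (polyhedron φ) ≤ ∑' i, μ (cap K (φ i)) := by
  have hsub : K ⊆ (⋃ i, cap K (φ i)) ∪ polyhedron φ := by
    intro x hx
    by_cases h : x ∈ polyhedron φ
    · exact .inr h
    · obtain ⟨i, hi⟩ : ∃ i, 1 < φ i x := by simpa [polyhedron] using h
      exact .inl (Set.mem_iUnion.2 ⟨i, hx, hi⟩)
  rw [tsub_le_iff_right]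
  exact (measure_mono hsub).trans
    ((measure_union_le _ _).trans (add_le_add_left (measure_iUnion_le _) _))

variable [BorelSpace E]

lemma measurableSet_cap (hK : MeasurableSet K) (f : E →L[ℝ] ℝ) : MeasurableSet (cap K f) :=
  hK.inter (isOpen_lt continuous_const f.continuous).measurableSet

variable [FiniteDimensional ℝ E] {μ : Measure E} [μ.IsAddHaarMeasure] [Countable ι]

/-- Each cap of `K` reappears in `a • K + c • L`, scaled by `a` and translated by `c` times a point
of `L` that is extreme in the direction of the cap. -/
theorem measure_add_caps_le (hK : MeasurableSet K) (hL : IsCompact L) (hne : L.Nonempty)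
    (ha : 0 < a) (hc : 0 ≤ c) (hcap : ∀ x ∈ K, ∀ i j, 1 < φ i x → 1 < φ j x → i = j)
    (hφK : polyhedron φ ⊆ K) (hW : W ⊆ a • polyhedron φ + c • L) :
    μ W + ENNReal.ofReal (a ^ Module.finrank ℝ E) * (μ K - μ (polyhedron φ)) ≤
      μ (a • K + c • L) := by
  choose y hy hmax using fun i ↦ hL.exists_isMaxOn hne (φ i).continuous.continuousOn
  have hmeas (i : ι) : MeasurableSet (c • y i +ᵥ a • cap K (φ i)) :=
    ((measurableSet_cap hK (φ i)).const_smul_of_ne_zero ha.ne').const_vadd _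
  have hvol (i : ι) : μ (c • y i +ᵥ a • cap K (φ i)) =
      ENNReal.ofReal (a ^ Module.finrank ℝ E) * μ (cap K (φ i)) := by
    rw [measure_vadd, Measure.addHaar_smul, abs_of_nonneg (by positivity)]
  calc μ W + ENNReal.ofReal (a ^ Module.finrank ℝ E) * (μ K - μ (polyhedron φ))
      ≤ μ W + ENNReal.ofReal (a ^ Module.finrank ℝ E) * ∑' i, μ (cap K (φ i)) := by
        gcongr
        exact measure_sub_le_tsum_cap μ φ K
    _ = μ (W ∪ ⋃ i, c • y i +ᵥ a • cap K (φ i)) := by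
        rw [← ENNReal.tsum_mul_left, measure_union
          ((disjoint_iUnion_vadd_smul_cap ha hc hmax).mono_left hW) (.iUnion hmeas),
          measure_iUnion (pairwise_disjoint_vadd_smul_cap ha hc hcap hy hmax) hmeas]
        simp_rw [hvol]
    _ ≤ μ (a • K + c • L) := by
        refine measure_mono (Set.union_subset (hW.trans ?_) (Set.iUnion_subset fun i ↦ ?_))
        · gcongr
        · rintro _ ⟨_, ⟨x, hx, rfl⟩, rfl⟩
          exact ⟨a • x, Set.smul_mem_smul_set hx.1, c • y i, Set.smul_mem_smul_set (hy i),
            add_comm _ _⟩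

end Caps

/-! ### The regular hexagon in lattice coordinates -/

/-- The three functionals `x.1`, `x.2` and `x.1 + x.2`. -/
def hexagonFunctional : Fin 3 → ℝ × ℝ →L[ℝ] ℝ :=
  ![.fst ℝ ℝ ℝ, .snd ℝ ℝ ℝ, .fst ℝ ℝ ℝ + .snd ℝ ℝ ℝ]

/-- The affinely regular hexagon with vertices `±(1, 0)`, `±(0, 1)` and `±(1, -1)`. -/
def standardHexagon : Set (ℝ × ℝ) := {x | ∀ i, |hexagonFunctional i x| ≤ 1}

section StandardHexagon

variable {g : Seminorm ℝ (ℝ × ℝ)}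

@[simp] lemma hexagonFunctional_zero (x : ℝ × ℝ) : hexagonFunctional 0 x = x.1 := rfl

@[simp] lemma hexagonFunctional_one (x : ℝ × ℝ) : hexagonFunctional 1 x = x.2 := rfl

@[simp] lemma hexagonFunctional_two (x : ℝ × ℝ) : hexagonFunctional 2 x = x.1 + x.2 := rfl

lemma UnitHexagon.exists_abs_hexagonFunctional_le (h : UnitHexagon g (1, 0) (0, 1)) (x : ℝ × ℝ) :
    ∃ i, g x ≤ |hexagonFunctional i x| ∧ ∀ j ≠ i, |hexagonFunctional j x| ≤ g x := by
  have hx : x.1 • ((1, 0) : ℝ × ℝ) + x.2 • ((0, 1) : ℝ × ℝ) = x := by ext <;> simp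
  have := h.abs_coord_le x.1 x.2
  rw [hx] at this
  rcases this with ⟨h1, h2, h3⟩ | ⟨h1, h2, h3⟩ | ⟨h1, h2, h3⟩
  · exact ⟨2, h3, by simp [Fin.forall_fin_succ, h1, h2]⟩
  · exact ⟨1, h3, by simp [Fin.forall_fin_succ, h1, h2]⟩
  · exact ⟨0, h3, by simp [Fin.forall_fin_succ, h1, h2]⟩

lemma UnitHexagon.one_le_map_int (h : UnitHexagon g (1, 0) (0, 1)) {m n : ℤ}
    (hmn : ¬(m = 0 ∧ n = 0)) : 1 ≤ g ((m : ℝ), (n : ℝ)) := by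
  obtain ⟨i, -, hi⟩ := h.exists_abs_hexagonFunctional_le ((m : ℝ), (n : ℝ))
  obtain ⟨j, hj, k, hk, hval⟩ : ∃ j ≠ i, ∃ k : ℤ, k ≠ 0 ∧
      hexagonFunctional j ((m : ℝ), (n : ℝ)) = k := by
    by_cases hm : m = 0
    · have hn : n ≠ 0 := fun hn ↦ hmn ⟨hm, hn⟩
      by_cases hi1 : i = 1
      · exact ⟨2, by simp [hi1], n, hn, by simp [hm]⟩
      · exact ⟨1, Ne.symm hi1, n, hn, rfl⟩
    · by_cases hi0 : i = 0
      · by_cases hn : n = 0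
        · exact ⟨2, by simp [hi0], m, hm, by simp [hn]⟩
        · exact ⟨1, by simp [hi0], n, hn, rfl⟩
      · exact ⟨0, Ne.symm hi0, m, hm, rfl⟩
  calc (1 : ℝ) ≤ |(k : ℝ)| := by exact_mod_cast Int.one_le_abs hk
    _ ≤ g ((m : ℝ), (n : ℝ)) := hval ▸ hi j hj

lemma UnitHexagon.standardHexagon_subset (h : UnitHexagon g (1, 0) (0, 1)) :
    standardHexagon ⊆ g.closedBall 0 1 := by
  intro x hx
  obtain ⟨i, hi, -⟩ := h.exists_abs_hexagonFunctional_le x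
  exact g.mem_closedBall_zero.2 (hi.trans (hx i))

lemma UnitHexagon.eq_of_one_lt_abs (h : UnitHexagon g (1, 0) (0, 1)) {x : ℝ × ℝ} (hx : g x ≤ 1)
    {i j : Fin 3} (hi : 1 < |hexagonFunctional i x|) (hj : 1 < |hexagonFunctional j x|) :
    i = j := by
  obtain ⟨k, -, hk⟩ := h.exists_abs_hexagonFunctional_le x
  have heq (i : Fin 3) (hi : 1 < |hexagonFunctional i x|) : i = k := by
    by_contra hik
    linarith [hk i hik]
  rw [heq i hi, heq j hj]

lemma polyhedron_elim_neg : polyhedron (Sum.elim hexagonFunctional (-hexagonFunctional)) =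
    standardHexagon := by
  ext x
  simp [polyhedron, standardHexagon, abs_le', forall_and]

lemma integral_two_sub_abs : ∫ x in (-1 : ℝ)..1, (2 - |x|) = 3 := by
  have hneg : ∫ x in (-1 : ℝ)..0, (2 - |x|) = ∫ x in (-1 : ℝ)..0, (2 + x) :=
    intervalIntegral.integral_congr fun x hx ↦ by
      rw [Set.uIcc_of_le (by norm_num)] at hx
      simp only [abs_of_nonpos hx.2, sub_neg_eq_add]
  have hpos : ∫ x in (0 : ℝ)..1, (2 - |x|) = ∫ x in (0 : ℝ)..1, (2 - x) :=
    intervalIntegral.integral_congr fun x hx ↦ by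
      rw [Set.uIcc_of_le (by norm_num)] at hx
      simp only [abs_of_nonneg hx.1]
  rw [← intervalIntegral.integral_add_adjacent_intervals (b := 0)
    (Continuous.intervalIntegrable (by fun_prop) _ _)
    (Continuous.intervalIntegrable (by fun_prop) _ _), hneg, hpos,
    intervalIntegral.integral_add (by simp) (by simp),
    intervalIntegral.integral_sub (by simp) (by simp)]
  norm_num

lemma preimage_standardHexagon_subset (x : ℝ) :
    Prod.mk x ⁻¹' standardHexagon ⊆ Set.Icc (max (-1) (-1 - x)) (min 1 (1 - x)) := fun y hy ↦ by
  have h1 := abs_le.1 (hy 1)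
  have h2 := abs_le.1 (hy 2)
  simp only [hexagonFunctional_one, hexagonFunctional_two] at h1 h2
  exact ⟨max_le (by linarith) (by linarith), le_min (by linarith) (by linarith)⟩

lemma volume_preimage_standardHexagon_le (x : ℝ) :
    volume (Prod.mk x ⁻¹' standardHexagon) ≤
      (Set.Icc (-1) 1).indicator (fun x ↦ ENNReal.ofReal (2 - |x|)) x := by
  by_cases hx : x ∈ Set.Icc (-1 : ℝ) 1
  · rw [Set.indicator_of_mem hx]
    refine (measure_mono (preimage_standardHexagon_subset x)).trans ?_
    rw [Real.volume_Icc]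
    apply ENNReal.ofReal_le_ofReal
    rcases abs_cases x with ⟨h, -⟩ | ⟨h, -⟩ <;> rw [h]
    · linarith [min_le_right 1 (1 - x), le_max_left (-1) (-1 - x)]
    · linarith [min_le_left 1 (1 - x), le_max_right (-1) (-1 - x)]
  · rw [Set.indicator_of_notMem hx, Set.preimage_eq_empty_iff.2, measure_empty]
    rw [Set.disjoint_left]
    rintro _ hy ⟨y, rfl⟩
    exact hx (abs_le.1 (hy 0))

lemma volume_standardHexagon_le : volume standardHexagon ≤ 3 := by
  have hmeas : MeasurableSet standardHexagon := by
    simp only [standardHexagon, Set.ofPred_forall]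
    exact .iInter fun i ↦ (isClosed_le (by fun_prop) continuous_const).measurableSet
  rw [Measure.volume_eq_prod, Measure.prod_apply hmeas]
  calc ∫⁻ x, volume (Prod.mk x ⁻¹' standardHexagon)
      ≤ ∫⁻ x in Set.Icc (-1 : ℝ) 1, ENNReal.ofReal (2 - |x|) := by
        rw [← lintegral_indicator measurableSet_Icc]
        exact lintegral_mono volume_preimage_standardHexagon_le
    _ = ENNReal.ofReal (∫ x in (-1 : ℝ)..1, (2 - |x|)) := by
        rw [intervalIntegral.integral_of_le (by norm_num), ← integral_Icc_eq_integral_Ioc,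
          ofReal_integral_eq_lintegral_ofReal (Continuous.integrableOn_Icc (by fun_prop))]
        filter_upwards [ae_restrict_mem measurableSet_Icc] with x hx
        have : |x| ≤ 1 := abs_le.2 hx
        simp only [Pi.zero_apply]
        linarith
    _ = 3 := by rw [integral_two_sub_abs, ENNReal.ofReal_ofNat]

end StandardHexagon

/-! ### The area of `a • C + c • L` -/

section SectionArea

variable {g : Seminorm ℝ (ℝ × ℝ)} {L : Set (ℝ × ℝ)} {a c : ℝ}

/-- The Minkowski sum of `M` and the hexagon `a • standardHexagon`, the latter written as a sum of
three segments. -/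
def hexagonSum (a : ℝ) (M : Set (ℝ × ℝ)) : Set (ℝ × ℝ) :=
  M + centeredSegment a (1, 0) + centeredSegment a (0, -1) + centeredSegment a (1, -1)

lemma hexagonSum_subset (ha : 0 < a) (M : Set (ℝ × ℝ)) :
    hexagonSum a M ⊆ a • standardHexagon + M := by
  rintro _ ⟨_, ⟨_, ⟨y, hy, _, ⟨α, hα, rfl⟩, rfl⟩, _, ⟨β, hβ, rfl⟩, rfl⟩, _, ⟨γ, hγ, rfl⟩, rfl⟩
  rw [Set.mem_Icc] at hα hβ hγ
  have hz : (α + γ, -(β + γ)) ∈ a • standardHexagon := by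
    rw [Set.mem_smul_set_iff_inv_smul_mem₀ ha.ne']
    intro i
    rw [map_smul, smul_eq_mul, abs_mul, abs_inv, abs_of_pos ha, inv_mul_le_iff₀ ha, mul_one, abs_le]
    fin_cases i
    · exact ⟨show -a ≤ α + γ by linarith, show α + γ ≤ a by linarith⟩
    · exact ⟨show -a ≤ -(β + γ) by linarith, show -(β + γ) ≤ a by linarith⟩
    · exact ⟨show -a ≤ α + γ + -(β + γ) by linarith, show α + γ + -(β + γ) ≤ a by linarith⟩
  refine ⟨_, hz, y, hy, ?_⟩
  ext
  · simp; ring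
  · simp; ring

lemma volume_add_le_volume_hexagonSum {M : Set (ℝ × ℝ)} (hM : IsCompact M) (hconv : Convex ℝ M)
    {u v : Fin 3 → ℝ × ℝ} (hu : ∀ i, u i ∈ M) (hv : ∀ i, v i ∈ M) (ha : 0 ≤ a) :
    volume M + ENNReal.ofReal (a * ∑ i, hexagonFunctional i (u i - v i) + 3 * a ^ 2) ≤
      volume (hexagonSum a M) := by
  have memPos := half_smul_mem_centeredSegment (E := ℝ × ℝ) ha
  have memNeg := neg_half_smul_mem_centeredSegment (E := ℝ × ℝ) ha
  have hM₁ := hM.add (isCompact_centeredSegment a ((1, 0) : ℝ × ℝ))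
  have hconv₁ := hconv.add (convex_centeredSegment a ((1, 0) : ℝ × ℝ))
  have h₁ := volume_add_le_volume_add_centeredSegment hM hconv (hv 1) (hu 1) ha (1, 0)
  have h₂ := volume_add_le_volume_add_centeredSegment hM₁ hconv₁
    (Set.add_mem_add (hv 0) (memNeg (1, 0))) (Set.add_mem_add (hu 0) (memPos (1, 0))) ha (0, -1)
  have h₃ := volume_add_le_volume_add_centeredSegment
    (hM₁.add (isCompact_centeredSegment a ((0, -1) : ℝ × ℝ)))
    (hconv₁.add (convex_centeredSegment a ((0, -1) : ℝ × ℝ)))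
    (Set.add_mem_add (Set.add_mem_add (hv 2) (memNeg (1, 0))) (memPos (0, -1)))
    (Set.add_mem_add (Set.add_mem_add (hu 2) (memPos (1, 0))) (memNeg (0, -1))) ha (1, -1)
  refine le_trans ?_ ((add_le_add_left ((add_le_add_left h₁ _).trans h₂) _).trans h₃)
  rw [add_assoc, add_assoc]
  gcongr
  refine le_trans (ENNReal.ofReal_le_ofReal ?_)
    (ENNReal.ofReal_add_le.trans (add_le_add_right ENNReal.ofReal_add_le _))
  apply le_of_eq
  simp [wedge, Fin.sum_univ_three]
  ring

theorem IsIntegerCovering.le_volume_hexagonSum (hcov : IsIntegerCovering L) (hL : IsCompact L)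
    (hconv : Convex ℝ L) (ha : 0 ≤ a) (hc : 0 ≤ c) :
    ENNReal.ofReal (c ^ 2 + 4 * a * c + 3 * a ^ 2) ≤ volume (hexagonSum a (c • L)) := by
  have hne : L.Nonempty := let ⟨_, _, h⟩ := hcov 0; ⟨_, h⟩
  choose u hu hmax using
    fun i ↦ hL.exists_isMaxOn hne (hexagonFunctional i).continuous.continuousOn
  choose v hv hmin using
    fun i ↦ hL.exists_isMinOn hne (hexagonFunctional i).continuous.continuousOn
  have hwidth : 4 ≤ ∑ i, hexagonFunctional i (u i - v i) := by
    simp only [map_sub, Fin.sum_univ_three]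
    exact hcov.four_le_widths (fun x hx ↦ ⟨hmin 0 hx, hmax 0 hx⟩)
      (fun x hx ↦ ⟨hmin 1 hx, hmax 1 hx⟩) fun x hx ↦ ⟨hmin 2 hx, hmax 2 hx⟩
  have harea : ENNReal.ofReal (c ^ 2) ≤ volume (c • L) := by
    rw [Measure.addHaar_smul, Module.finrank_prod, Module.finrank_self,
      abs_of_nonneg (by positivity)]
    exact le_mul_of_one_le_right' hcov.one_le_volume
  have hsum := volume_add_le_volume_hexagonSum (hL.smul c) (hconv.smul c)
    (fun i ↦ Set.smul_mem_smul_set (hu i)) (fun i ↦ Set.smul_mem_smul_set (hv i)) ha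
  calc ENNReal.ofReal (c ^ 2 + 4 * a * c + 3 * a ^ 2)
      ≤ ENNReal.ofReal (c ^ 2) +
          ENNReal.ofReal (a * ∑ i, hexagonFunctional i (c • u i - c • v i) + 3 * a ^ 2) := by
        refine le_trans (ENNReal.ofReal_le_ofReal ?_) ENNReal.ofReal_add_le
        simp only [← smul_sub, map_smul, smul_eq_mul, ← Finset.mul_sum]
        linarith [mul_le_mul_of_nonneg_left hwidth (mul_nonneg ha hc)]
    _ ≤ volume (hexagonSum a (c • L)) := (add_le_add_left harea _).trans hsum

lemma UnitHexagon.eq_of_one_lt_elim_neg (h : UnitHexagon g (1, 0) (0, 1)) {x : ℝ × ℝ}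
    (hx : g x ≤ 1) {i j : Fin 3 ⊕ Fin 3}
    (hi : 1 < Sum.elim hexagonFunctional (-hexagonFunctional) i x)
    (hj : 1 < Sum.elim hexagonFunctional (-hexagonFunctional) j x) : i = j := by
  rcases i with i | i <;> rcases j with j | j <;>
    simp only [Sum.elim_inl, Sum.elim_inr, Pi.neg_apply, neg_apply] at hi hj
  · rw [h.eq_of_one_lt_abs hx (lt_abs.2 (.inl hi)) (lt_abs.2 (.inl hj))]
  · obtain rfl := h.eq_of_one_lt_abs hx (lt_abs.2 (.inl hi)) (lt_abs.2 (.inr hj))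
    linarith
  · obtain rfl := h.eq_of_one_lt_abs hx (lt_abs.2 (.inr hi)) (lt_abs.2 (.inl hj))
    linarith
  · rw [h.eq_of_one_lt_abs hx (lt_abs.2 (.inr hi)) (lt_abs.2 (.inr hj))]

theorem UnitHexagon.le_volume_smul_add_smul (h : UnitHexagon g (1, 0) (0, 1)) (hg : IsDefinite g)
    (hcov : IsIntegerCovering L) (hL : IsCompact L) (hconv : Convex ℝ L) (ha : 0 < a)
    (hc : 0 ≤ c) :
    ENNReal.ofReal (a ^ 2 * volume.real (g.closedBall 0 1) + 4 * a * c + c ^ 2) ≤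
      volume (a • g.closedBall 0 1 + c • L) := by
  have hcaps := measure_add_caps_le (μ := volume) (hg.isCompact_closedBall 1).measurableSet hL
    (let ⟨_, _, h⟩ := hcov 0; ⟨_, h⟩) ha hc
    (fun x hx _ _ ↦ h.eq_of_one_lt_elim_neg (g.mem_closedBall_zero.1 hx))
    (polyhedron_elim_neg.trans_subset h.standardHexagon_subset)
    (polyhedron_elim_neg ▸ hexagonSum_subset ha (c • L))
  rw [Module.finrank_prod, Module.finrank_self, polyhedron_elim_neg] at hcaps
  have hbody : ENNReal.ofReal (volume.real (g.closedBall 0 1) - 3) ≤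
      volume (g.closedBall 0 1) - volume standardHexagon := by
    rw [ENNReal.ofReal_sub _ (by norm_num), ENNReal.ofReal_ofNat,
      ofReal_measureReal (hg.isCompact_closedBall 1).measure_ne_top]
    exact tsub_le_tsub_left volume_standardHexagon_le _
  refine le_trans ?_ hcaps
  calc ENNReal.ofReal (a ^ 2 * volume.real (g.closedBall 0 1) + 4 * a * c + c ^ 2)
      = ENNReal.ofReal ((c ^ 2 + 4 * a * c + 3 * a ^ 2) +
          a ^ 2 * (volume.real (g.closedBall 0 1) - 3)) := by congr 1; ring
    _ ≤ _ := ENNReal.ofReal_add_le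
    _ ≤ _ := by
      rw [ENNReal.ofReal_mul (by positivity)]
      gcongr
      exact hcov.le_volume_hexagonSum hL hconv ha.le hc

end SectionArea

/-! ### Volume from slices -/

section Slices

variable {E : Type*} [NormedAddCommGroup E] [NormedSpace ℝ E] [FiniteDimensional ℝ E]
  [MeasureSpace E] [BorelSpace E] [(volume : Measure E).IsAddHaarMeasure] {K : Set (ℝ × E)}

lemma two_mul_volume_inter_pos_le (hK : MeasurableSet K) (hneg : ∀ x ∈ K, -x ∈ K) :
    2 * volume (K ∩ {x | 0 < x.1}) ≤ volume K := by
  have hpos : MeasurableSet {x : ℝ × E | 0 < x.1} :=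
    (isOpen_lt continuous_const continuous_fst).measurableSet
  have hdisj : Disjoint (K ∩ {x | 0 < x.1}) (-(K ∩ {x | 0 < x.1})) := by
    rw [Set.disjoint_left]
    rintro x ⟨-, h1 : 0 < x.1⟩ ⟨-, h2 : 0 < -x.1⟩
    linarith
  have hsymm : volume (-(K ∩ {x | 0 < x.1})) = volume (K ∩ {x | 0 < x.1}) := by
    rw [Measure.volume_eq_prod, Measure.measure_neg]
  calc 2 * volume (K ∩ {x | 0 < x.1})
      = volume ((K ∩ {x | 0 < x.1}) ∪ -(K ∩ {x | 0 < x.1})) := by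
        rw [measure_union hdisj (hK.inter hpos).neg, hsymm, two_mul]
    _ ≤ volume K := measure_mono <| Set.union_subset Set.inter_subset_left
        fun x hx ↦ by simpa using hneg _ hx.1

lemma mul_integral_le_volume (hK : MeasurableSet K) (hfin : volume K ≠ ⊤)
    (hneg : ∀ x ∈ K, -x ∈ K) {s : ℝ} (hs : 0 < s) {f : ℝ → ℝ} (hf : Continuous f)
    (hf0 : ∀ l ∈ Set.Ioo 0 1, 0 ≤ f l)
    (h : ∀ l ∈ Set.Ioo 0 1, ENNReal.ofReal (f l) ≤ volume (Prod.mk (l * s) ⁻¹' K)) :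
    2 * s * ∫ l in (0 : ℝ)..1, f l ≤ volume.real K := by
  have hpos : MeasurableSet {x : ℝ × E | 0 < x.1} :=
    (isOpen_lt continuous_const continuous_fst).measurableSet
  have hscale : s * ∫ l in (0 : ℝ)..1, f l = ∫ t in Set.Ioo 0 s, f (t / s) := by
    have := intervalIntegral.integral_comp_div (a := 0) (b := s) f hs.ne'
    rw [zero_div, div_self hs.ne', smul_eq_mul] at this
    rw [← this, intervalIntegral.integral_of_le hs.le, integral_Ioc_eq_integral_Ioo]
  have hmem {t : ℝ} (ht : t ∈ Set.Ioo 0 s) : t / s ∈ Set.Ioo 0 1 :=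
    ⟨div_pos ht.1 hs, (div_lt_one hs).2 ht.2⟩
  have hslice (t : ℝ) : (Set.Ioo 0 s).indicator (fun t ↦ ENNReal.ofReal (f (t / s))) t ≤
      volume (Prod.mk t ⁻¹' (K ∩ {x | 0 < x.1})) := by
    refine Set.indicator_apply_le' (fun ht ↦ ?_) fun _ ↦ zero_le
    refine (h _ (hmem ht)).trans (measure_mono fun x hx ↦ ?_)
    rw [div_mul_cancel₀ _ hs.ne'] at hx
    exact ⟨hx, ht.1⟩
  have hhalf : ENNReal.ofReal (s * ∫ l in (0 : ℝ)..1, f l) ≤ volume (K ∩ {x | 0 < x.1}) := by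
    rw [hscale, ofReal_integral_eq_lintegral_ofReal, Measure.volume_eq_prod,
      Measure.prod_apply (hK.inter hpos), ← lintegral_indicator measurableSet_Ioo]
    · exact lintegral_mono hslice
    · exact (Continuous.integrableOn_Icc (by fun_prop)).mono_set Set.Ioo_subset_Icc_self
    · filter_upwards [ae_restrict_mem measurableSet_Ioo] with t ht using hf0 _ (hmem ht)
  rw [measureReal_def, ← ENNReal.ofReal_le_iff_le_toReal hfin]
  refine le_trans ?_ (two_mul_volume_inter_pos_le hK hneg)
  rw [mul_assoc, ENNReal.ofReal_mul zero_le_two, ENNReal.ofReal_ofNat]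
  gcongr

end Slices

/-! ### Choosing the next layer -/

section Layers

variable {N : Seminorm ℝ (ℝ × ℝ × ℝ)} {p q w v x₀ : ℝ × ℝ} {t s H : ℝ}

/-- The vector with integer coordinates `z` with respect to `(0, p)`, `(0, q)` and `(t, w)`. -/
def layerVector (p q : ℝ × ℝ) (t : ℝ) (w : ℝ × ℝ) (z : Fin 3 → ℤ) : ℝ × ℝ × ℝ :=
  (z 2 * t, (z 0 : ℝ) • p + (z 1 : ℝ) • q + (z 2 : ℝ) • w)

/-- The lattice spanned by `(0, p)`, `(0, q)` and `(t, w)` is admissible for the unit ball of `N`: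
its nonzero vectors lie outside the interior of the ball. -/
def IsAdmissible (N : Seminorm ℝ (ℝ × ℝ × ℝ)) (p q : ℝ × ℝ) (t : ℝ) (w : ℝ × ℝ) : Prop :=
  ∀ z : Fin 3 → ℤ, z ≠ 0 → 1 ≤ N (layerVector p q t w z)

/-- The layer `{t} × (v + ℤ²)` avoids the interior of the unit ball of `N`. -/
def IsAdmissibleLayer (N : Seminorm ℝ (ℝ × ℝ × ℝ)) (t : ℝ) (v : ℝ × ℝ) : Prop :=
  ∀ m n : ℤ, 1 ≤ N (t, v + ((m : ℝ), (n : ℝ)))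

/-- The restriction of `N` to the plane `{0} × ℝ²`. -/
def planeSection (N : Seminorm ℝ (ℝ × ℝ × ℝ)) : Seminorm ℝ (ℝ × ℝ) :=
  N.comp (LinearMap.inr ℝ ℝ (ℝ × ℝ))

@[simp] lemma planeSection_apply (N : Seminorm ℝ (ℝ × ℝ × ℝ)) (x : ℝ × ℝ) :
    planeSection N x = N (0, x) := rfl

lemma IsDefinite.planeSection (hN : IsDefinite N) : IsDefinite (planeSection N) :=
  fun x hx ↦ hN (0, x) (by simpa using hx)

/-- `H` is the largest height attained by the unit ball of `N`. -/
structure IsHeight (N : Seminorm ℝ (ℝ × ℝ × ℝ)) (H : ℝ) : Prop where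
  pos : 0 < H
  attained : ∃ x, N (H, x) ≤ 1
  abs_le : ∀ y, |y.1| ≤ H * N y

lemma IsDefinite.exists_isHeight (hN : IsDefinite N) : ∃ H, IsHeight N H := by
  obtain ⟨⟨H, x₀⟩, hx₀, hmax⟩ := (hN.isCompact_closedBall 1).exists_isMaxOn
    ⟨0, N.mem_closedBall_self zero_le_one⟩ continuous_fst.continuousOn
  have hfst (y) (hy : y ≠ 0) : y.1 ≤ H * N y := by
    have h : (N y)⁻¹ * y.1 ≤ H :=
      hmax (N.mem_closedBall_zero.2 (hN.seminorm_inv_smul_self hy).le)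
    rwa [inv_mul_eq_div, div_le_iff₀ (hN y hy)] at h
  refine ⟨H, ?_, ⟨x₀, N.mem_closedBall_zero.1 hx₀⟩, fun y ↦ ?_⟩
  · have h10 : ((1, 0) : ℝ × ℝ × ℝ) ≠ 0 := by simp
    exact pos_of_mul_pos_left (one_pos.trans_le (hfst _ h10)) (apply_nonneg N _)
  · rcases eq_or_ne y 0 with rfl | hy
    · simp
    · have := hfst (-y) (neg_ne_zero.2 hy)
      rw [map_neg_eq_map, Prod.fst_neg] at this
      exact abs_le.2 ⟨by linarith, hfst y hy⟩

lemma IsHeight.one_le (hH : IsHeight N H) {y : ℝ × ℝ × ℝ} (hy : H ≤ |y.1|) : 1 ≤ N y :=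
  le_of_mul_le_mul_left (by simpa using hy.trans (hH.abs_le y)) hH.pos

lemma isIntegerCovering_slice (h : ¬∃ v, IsAdmissibleLayer N s v) :
    IsIntegerCovering (Prod.mk s ⁻¹' N.closedBall 0 1) := by
  intro x
  by_contra! hcon
  refine h ⟨x, fun m n ↦ ?_⟩
  have := hcon m n
  rw [Set.mem_preimage, N.mem_closedBall_zero, not_le] at this
  exact this.le

lemma IsHeight.exists_admissibleLayer (hH : IsHeight N H) {r : ℝ} (hr0 : 0 < r) (hr1 : r < 1) :
    ∃ t, H ≤ 2 * t ∧ (∃ v, IsAdmissibleLayer N t v) ∧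
      (2 * (r * t) < H ∨ IsIntegerCovering (Prod.mk (r * t) ⁻¹' N.closedBall 0 1)) := by
  set S := {t | H ≤ 2 * t ∧ ∃ v, IsAdmissibleLayer N t v}
  have hbdd : BddBelow S := ⟨H / 2, fun t ht ↦ by linarith [ht.1]⟩
  have hHS : H ∈ S :=
    ⟨by linarith [hH.pos], 0, fun m n ↦ hH.one_le (le_abs_self H)⟩
  have hpos : 0 < sInf S := (half_pos hH.pos).trans_le <|
    le_csInf ⟨H, hHS⟩ fun t ht ↦ by linarith [ht.1]
  obtain ⟨t, ⟨ht, hv⟩, hlt⟩ : ∃ t ∈ S, t < sInf S / r :=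
    exists_lt_of_csInf_lt ⟨H, hHS⟩ ((lt_div_iff₀ hr0).2 (mul_lt_of_lt_one_right hpos hr1))
  refine ⟨t, ht, hv, ?_⟩
  rw [or_iff_not_imp_left, not_lt]
  intro hrt
  refine isIntegerCovering_slice fun h ↦ ?_
  rw [lt_div_iff₀' hr0] at hlt
  exact hlt.not_ge (csInf_le hbdd ⟨hrt, h⟩)

lemma IsHeight.isAdmissible (hH : IsHeight N H) (ht : H ≤ 2 * t)
    (hsec : UnitHexagon (planeSection N) (1, 0) (0, 1)) (hv : IsAdmissibleLayer N t v) :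
    IsAdmissible N (1, 0) (0, 1) t v := by
  intro z hz
  have ht0 : 0 < t := by linarith [hH.pos]
  have hfst : (layerVector (1, 0) (0, 1) t v z).1 = z 2 * t := rfl
  have hcases : z 2 = 0 ∨ z 2 = 1 ∨ z 2 = -1 ∨ 2 ≤ |z 2| := by grind
  rcases hcases with h0 | h1 | h1 | h2
  · have hz01 : ¬(z 0 = 0 ∧ z 1 = 0) := fun h ↦ hz <| by
      ext i; fin_cases i <;> simp [h, h0]
    simpa [layerVector, h0] using hsec.one_le_map_int hz01
  · simpa [layerVector, h1, add_comm v] using hv (z 0) (z 1)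
  · have := hv (-z 0) (-z 1)
    rw [← map_neg_eq_map] at this
    simpa [layerVector, h1, add_comm (-v)] using this
  · refine hH.one_le ?_
    have h2' : (2 : ℝ) ≤ |(z 2 : ℝ)| := by exact_mod_cast h2
    rw [hfst, abs_mul, abs_of_pos ht0]
    nlinarith

/-! ### The volume of the unit ball -/

lemma smul_add_smul_subset_slice {l : ℝ} (hl : l ∈ Set.Ioo 0 1) :
    (1 - l) • (planeSection N).closedBall 0 1 + l • (Prod.mk s ⁻¹' N.closedBall 0 1) ⊆
      Prod.mk (l * s) ⁻¹' N.closedBall 0 1 := by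
  rintro _ ⟨_, ⟨x, hx, rfl⟩, _, ⟨y, hy, rfl⟩, rfl⟩
  rw [Seminorm.mem_closedBall_zero, planeSection_apply] at hx
  rw [Set.mem_preimage, Seminorm.mem_closedBall_zero] at hy
  rw [Set.mem_preimage, Seminorm.mem_closedBall_zero]
  calc N (l * s, (1 - l) • x + l • y) = N ((1 - l) • (0, x) + l • (s, y)) := by simp
    _ ≤ (1 - l) * N (0, x) + l * N (s, y) :=
        seminorm_smul_add_smul_le N (sub_nonneg.2 hl.2.le) hl.1.le _ _
    _ ≤ (1 - l) * 1 + l * 1 := by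
        have := hl.1.le
        have := sub_nonneg.2 hl.2.le
        gcongr
    _ = 1 := by ring

lemma neg_mem_closedBall_zero {E : Type*} [AddCommGroup E] [Module ℝ E] {N : Seminorm ℝ E}
    {x : E} (hx : x ∈ N.closedBall 0 1) : -x ∈ N.closedBall 0 1 := by
  simpa only [Seminorm.mem_closedBall_zero, map_neg_eq_map] using hx

lemma isCompact_slice (hN : IsDefinite N) : IsCompact (Prod.mk s ⁻¹' N.closedBall 0 1) :=
  ((hN.isCompact_closedBall 1).image continuous_snd).of_isClosed_subset
    ((hN.isCompact_closedBall 1).isClosed.preimage (by fun_prop)) fun x hx ↦ ⟨(s, x), hx, rfl⟩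

lemma convex_slice : Convex ℝ (Prod.mk s ⁻¹' N.closedBall 0 1) := by
  intro x hx y hy a b ha hb hab
  have hcomb : (s, a • x + b • y) = a • (s, x) + b • (s, y) := by ext <;> simp [← add_mul, hab]
  rw [Set.mem_preimage, hcomb]
  exact N.convex_closedBall 0 1 hx hy ha hb hab

lemma integral_one_sub_sq_mul (A : ℝ) : ∫ l in (0 : ℝ)..1, (1 - l) ^ 2 * A = A / 3 := by
  rw [intervalIntegral.integral_mul_const,
    intervalIntegral.integral_comp_sub_left (fun l ↦ l ^ 2), integral_pow]
  norm_num
  ring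

lemma integral_sliceArea (A : ℝ) :
    ∫ l in (0 : ℝ)..1, ((1 - l) ^ 2 * A + 4 * (1 - l) * l + l ^ 2) = (A + 3) / 3 := by
  have hexp (l : ℝ) : 4 * (1 - l) * l + l ^ 2 = 4 * l - 3 * l ^ 2 := by ring
  simp_rw [add_assoc, hexp]
  rw [intervalIntegral.integral_add (Continuous.intervalIntegrable (by fun_prop) _ _)
      (Continuous.intervalIntegrable (by fun_prop) _ _), integral_one_sub_sq_mul,
    intervalIntegral.integral_sub (Continuous.intervalIntegrable (by fun_prop) _ _)
      (Continuous.intervalIntegrable (by fun_prop) _ _),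
    intervalIntegral.integral_const_mul, intervalIntegral.integral_const_mul, integral_id,
    integral_pow]
  norm_num
  ring

lemma IsIntegerCovering.le_volume_closedBall (hN : IsDefinite N)
    (hsec : UnitHexagon (planeSection N) (1, 0) (0, 1)) (hs : 0 < s)
    (hcov : IsIntegerCovering (Prod.mk s ⁻¹' N.closedBall 0 1)) :
    2 * s * (volume.real ((planeSection N).closedBall 0 1) + 3) / 3 ≤
      volume.real (N.closedBall 0 1) := by
  rw [mul_div_assoc, ← integral_sliceArea]
  refine mul_integral_le_volume (hN.isCompact_closedBall 1).measurableSet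
    (hN.isCompact_closedBall 1).measure_ne_top (fun x hx ↦ neg_mem_closedBall_zero hx)
    hs (by fun_prop) (fun l hl ↦ ?_) fun l hl ↦ ?_
  · have := hl.1.le
    have := sub_nonneg.2 hl.2.le
    positivity
  · exact (hsec.le_volume_smul_add_smul hN.planeSection hcov (isCompact_slice hN) convex_slice
      (sub_pos.2 hl.2) hl.1.le).trans (measure_mono (smul_add_smul_subset_slice hl))

lemma le_volume_closedBall_of_attained (hN : IsDefinite N) (hH : 0 < H) (hx₀ : N (H, x₀) ≤ 1) :
    2 * H * volume.real ((planeSection N).closedBall 0 1) / 3 ≤ volume.real (N.closedBall 0 1) := by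
  rw [mul_div_assoc, ← integral_one_sub_sq_mul]
  refine mul_integral_le_volume (hN.isCompact_closedBall 1).measurableSet
    (hN.isCompact_closedBall 1).measure_ne_top (fun x hx ↦ neg_mem_closedBall_zero hx)
    hH (by fun_prop) (fun l _ ↦ mul_nonneg (sq_nonneg _) measureReal_nonneg) fun l hl ↦ ?_
  have hl1 := sub_nonneg.2 hl.2.le
  calc ENNReal.ofReal ((1 - l) ^ 2 * volume.real ((planeSection N).closedBall 0 1))
      = volume (l • x₀ +ᵥ (1 - l) • (planeSection N).closedBall 0 1) := by
        rw [measure_vadd, Measure.addHaar_smul, Module.finrank_prod, Module.finrank_self,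
          abs_of_nonneg (by positivity), ENNReal.ofReal_mul (by positivity),
          ofReal_measureReal (hN.planeSection.isCompact_closedBall 1).measure_ne_top]
    _ ≤ volume (Prod.mk (l * H) ⁻¹' N.closedBall 0 1) := by
        refine measure_mono (subset_trans ?_ (smul_add_smul_subset_slice hl))
        rintro _ ⟨y, hy, rfl⟩
        exact ⟨y, hy, l • x₀, Set.smul_mem_smul_set (N.mem_closedBall_zero.2 hx₀), add_comm _ _⟩

theorem exists_isAdmissible_of_section (hN : IsDefinite N)
    (hsec : UnitHexagon (planeSection N) (1, 0) (0, 1))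
    (hA : 3.571 ≤ volume.real ((planeSection N).closedBall 0 1)) :
    ∃ t w, 0 < t ∧ IsAdmissible N (1, 0) (0, 1) t w ∧
      8 * 0.54757 * t ≤ volume.real (N.closedBall 0 1) := by
  obtain ⟨H, hH⟩ := hN.exists_isHeight
  obtain ⟨t, ht, ⟨v, hv⟩, hlow | hcov⟩ := hH.exists_admissibleLayer
    (r := 1 - 1e-6) (by norm_num) (by norm_num)
  all_goals
    have ht0 : 0 < t := by linarith [hH.pos]
    refine ⟨t, v, ht0, hH.isAdmissible ht hsec hv, ?_⟩
  · obtain ⟨x₀, hx₀⟩ := hH.attained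
    have := le_volume_closedBall_of_attained hN hH.pos hx₀
    nlinarith
  · have := hcov.le_volume_closedBall hN hsec (mul_pos (by norm_num) ht0)
    nlinarith

end Layers

/-! ### Reduction to a strictly convex section -/

section Reduction

variable {N : Seminorm ℝ (ℝ × ℝ × ℝ)} {g : Seminorm ℝ (ℝ × ℝ)} {p q u v : ℝ × ℝ}

lemma IsStrictNorm.exists_unitHexagon_min (hg : IsStrictNorm g) :
    ∃ p q, UnitHexagon g p q ∧ ∀ p' q', UnitHexagon g p' q' → wedge p q ≤ wedge p' q' := by
  have h10 : ((1, 0) : ℝ × ℝ) ≠ 0 := by simp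
  obtain ⟨q, hq⟩ := UnitHexagon.exists_right hg.definite (hg.definite.seminorm_inv_smul_self h10)
  have hcont : Continuous fun z : (ℝ × ℝ) × (ℝ × ℝ) ↦ wedge z.1 z.2 := by
    simp only [wedge]
    fun_prop
  obtain ⟨z, hz, hmin⟩ := hg.isCompact_setOf_unitHexagon.exists_isMinOn ⟨(_, q), hq⟩
    hcont.continuousOn
  exact ⟨z.1, z.2, hz, fun p' q' h ↦ hmin (a := (p', q')) h⟩

lemma IsDefinite.comp {E F : Type*} [AddCommGroup E] [Module ℝ E] [AddCommGroup F] [Module ℝ F]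
    {N : Seminorm ℝ F} (hN : IsDefinite N) {f : E →ₗ[ℝ] F} (hf : Function.Injective f) :
    IsDefinite (N.comp f) :=
  fun _ hx ↦ hN _ ((map_ne_zero_iff f hf).2 hx)

lemma wedge_columnMap (p q u v : ℝ × ℝ) :
    wedge (columnMap p q u) (columnMap p q v) = wedge u v * wedge p q := by
  simp only [columnMap_apply, wedge_add_left, wedge_add_right, wedge_smul_left, wedge_smul_right,
    wedge_self, wedge_swap p q]
  simp only [wedge]
  ring

lemma columnMap_injective (h : wedge p q ≠ 0) : Function.Injective (columnMap p q) := by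
  rw [← LinearMap.ker_eq_bot]
  contrapose! h
  rw [← det_columnMap, LinearMap.det_eq_zero_iff_ker_ne_bot]
  exact h

lemma IsStrictNorm.comp_columnMap (hg : IsStrictNorm g) (h : wedge p q ≠ 0) :
    IsStrictNorm (g.comp (columnMap p q)) where
  definite := hg.definite.comp (columnMap_injective h)
  map_add_lt u v huv := by
    simp only [Seminorm.comp_apply, map_add]
    exact hg.map_add_lt _ _ (wedge_columnMap p q u v ▸ mul_ne_zero huv h)

lemma unitHexagon_comp_columnMap_iff (h : 0 < wedge p q) :
    UnitHexagon (g.comp (columnMap p q)) u v ↔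
      UnitHexagon g (columnMap p q u) (columnMap p q v) := by
  have hpos : 0 < wedge (columnMap p q u) (columnMap p q v) ↔ 0 < wedge u v := by
    rw [wedge_columnMap, mul_pos_iff_of_pos_right h]
  have hsub : g.comp (columnMap p q) (v - u) = g (columnMap p q v - columnMap p q u) := by
    rw [Seminorm.comp_apply, map_sub]
  exact ⟨fun ⟨h1, h2, h3, h4⟩ ↦ ⟨h1, h2, hsub ▸ h3, hpos.2 h4⟩,
    fun ⟨h1, h2, h3, h4⟩ ↦ ⟨h1, h2, hsub.trans h3, hpos.1 h4⟩⟩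

/-- The linear map of `ℝ × ℝ²` fixing the first coordinate and applying `columnMap p q` to the
second. -/
noncomputable def layerMap (p q : ℝ × ℝ) : ℝ × ℝ × ℝ →ₗ[ℝ] ℝ × ℝ × ℝ :=
  LinearMap.id.prodMap (columnMap p q)

lemma layerMap_layerVector (p q : ℝ × ℝ) (t : ℝ) (w : ℝ × ℝ) (z : Fin 3 → ℤ) :
    layerMap p q (layerVector (1, 0) (0, 1) t w z) =
      layerVector p q t (columnMap p q w) z := by
  simp only [layerMap, layerVector, LinearMap.prodMap_apply, LinearMap.id_apply, map_add, map_smul]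
  simp [columnMap_apply]

lemma planeSection_comp_layerMap (N : Seminorm ℝ (ℝ × ℝ × ℝ)) (p q : ℝ × ℝ) :
    planeSection (N.comp (layerMap p q)) = (planeSection N).comp (columnMap p q) := by
  ext x
  simp [layerMap]

lemma volume_closedBall_comp_layerMap (N : Seminorm ℝ (ℝ × ℝ × ℝ)) (h : 0 < wedge p q) :
    volume.real (N.closedBall 0 1) =
      wedge p q * volume.real ((N.comp (layerMap p q)).closedBall 0 1) := by
  have hdet : LinearMap.det (layerMap p q) = wedge p q := by
    rw [layerMap, LinearMap.det_prodMap, LinearMap.det_id, det_columnMap, one_mul]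
  have hball : (N.comp (layerMap p q)).closedBall 0 1 = layerMap p q ⁻¹' N.closedBall 0 1 := by
    rw [Seminorm.closedBall_comp, map_zero]
  rw [hball, measureReal_def, measureReal_def, Measure.volume_eq_prod,
    Measure.addHaar_preimage_linearMap _ (hdet ▸ h.ne'), hdet, ENNReal.toReal_mul, abs_inv,
    abs_of_pos h, ENNReal.toReal_ofReal (by positivity), mul_inv_cancel_left₀ h.ne']

theorem exists_isAdmissible_of_isStrictNorm (hN : IsDefinite N)
    (hg : IsStrictNorm (planeSection N)) :
    ∃ p q t w, 0 < t ∧ 0 < wedge p q ∧ IsAdmissible N p q t w ∧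
      8 * 0.54757 * (t * wedge p q) ≤ volume.real (N.closedBall 0 1) := by
  obtain ⟨p, q, hpq, hmin⟩ := hg.exists_unitHexagon_min
  have hpos := hpq.wedge_pos
  have hN' : IsDefinite (N.comp (layerMap p q)) := hN.comp <|
    Function.injective_id.prodMap (columnMap_injective hpos.ne')
  have hsec : UnitHexagon (planeSection (N.comp (layerMap p q))) (1, 0) (0, 1) := by
    rw [planeSection_comp_layerMap, unitHexagon_comp_columnMap_iff hpos]
    simpa [columnMap_apply] using hpq
  have hg' : IsStrictNorm (planeSection (N.comp (layerMap p q))) := by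
    rw [planeSection_comp_layerMap]
    exact hg.comp_columnMap hpos.ne'
  have hmin' (u v : ℝ × ℝ) (h : UnitHexagon (planeSection (N.comp (layerMap p q))) u v) :
      1 ≤ wedge u v := by
    rw [planeSection_comp_layerMap, unitHexagon_comp_columnMap_iff hpos] at h
    have := hmin _ _ h
    rwa [wedge_columnMap, le_mul_iff_one_le_left hpos] at this
  obtain ⟨t, w, ht, hadm, hvol⟩ := exists_isAdmissible_of_section hN' hsec
    (le_area_closedBall hg' hmin' hsec (by simp [wedge]))
  refine ⟨p, q, t, columnMap p q w, ht, hpos, fun z hz ↦ ?_, ?_⟩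
  · rw [← layerMap_layerVector]
    exact hadm z hz
  · rw [volume_closedBall_comp_layerMap N hpos]
    nlinarith

/-! ### Approximation by norms with strictly convex section -/

lemma wedge_eq_zero_of_sameRay (h : SameRay ℝ u v) : wedge u v = 0 := by
  rcases h with rfl | rfl | ⟨a, b, ha, -, hab⟩
  · exact wedge_zero_left v
  · exact wedge_zero_right u
  · have := congrArg (wedge · v) hab
    simpa [ha.ne'] using this

/-- The Euclidean norm of the plane, as a seminorm on `ℝ × ℝ`, whose own norm is the supremum
norm. -/
noncomputable def euclideanSeminorm : Seminorm ℝ (ℝ × ℝ) :=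
  (normSeminorm ℝ ℂ).comp Complex.equivRealProdLm.symm.toLinearMap

lemma euclideanSeminorm_add_lt (h : wedge u v ≠ 0) :
    euclideanSeminorm (u + v) < euclideanSeminorm u + euclideanSeminorm v := by
  simp only [euclideanSeminorm, Seminorm.comp_apply, map_add, coe_normSeminorm]
  exact norm_add_lt_of_not_sameRay fun hray ↦
    h (wedge_eq_zero_of_sameRay (SameRay.sameRay_map_iff Complex.equivRealProdLm.symm |>.1 hray))

lemma IsDefinite.exists_le_mul {E : Type*} [NormedAddCommGroup E] [NormedSpace ℝ E]
    [FiniteDimensional ℝ E] {N : Seminorm ℝ E} (hN : IsDefinite N) (P : Seminorm ℝ E) :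
    ∃ C > 0, ∀ x, P x ≤ C * N x := by
  obtain ⟨c, hc, hcN⟩ := hN.exists_mul_norm_le
  obtain ⟨C, hC, hCP⟩ := Seminorm.bound_of_continuous_normedSpace P (continuous_seminorm P)
  refine ⟨C / c, by positivity, fun x ↦ (hCP x).trans ?_⟩
  rw [div_mul_eq_mul_div, mul_div_assoc]
  gcongr
  rw [le_div_iff₀' hc]
  exact hcN x

lemma exists_isStrictNorm_planeSection_ge (hN : IsDefinite N) {ε : ℝ} (hε : 0 < ε) :
    ∃ N₁, IsDefinite N₁ ∧ IsStrictNorm (planeSection N₁) ∧ (∀ x, N x ≤ N₁ x) ∧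
      ∀ x, N₁ x ≤ (1 + ε) * N x := by
  set P := euclideanSeminorm.comp (LinearMap.snd ℝ ℝ (ℝ × ℝ))
  obtain ⟨C, hC, hPN⟩ := hN.exists_le_mul P
  have hδ : 0 < ε / C := by positivity
  set N₁ := N + (ε / C).toNNReal • P
  have hN₁ (x) : N₁ x = N x + ε / C * euclideanSeminorm x.2 := by
    simp [N₁, P, NNReal.smul_def, Real.coe_toNNReal _ hδ.le]
  have hle (x) : N x ≤ N₁ x := by
    rw [hN₁, le_add_iff_nonneg_right]
    positivity
  have hdef : IsDefinite N₁ := fun x hx ↦ (hN x hx).trans_le (hle x)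
  refine ⟨N₁, hdef, ⟨hdef.planeSection, fun x y hxy ↦ ?_⟩, hle, fun x ↦ ?_⟩
  · have h1 := map_add_le_add (planeSection N) x y
    have h2 := mul_lt_mul_of_pos_left (euclideanSeminorm_add_lt hxy) hδ
    simp only [planeSection_apply, hN₁] at h1 ⊢
    linarith
  · have := mul_le_mul_of_nonneg_left (hPN x) hδ.le
    rw [← mul_assoc, div_mul_cancel₀ ε hC.ne'] at this
    rw [hN₁, one_add_mul]
    exact add_le_add_right this _

theorem IsDefinite.exists_layerVector (hN : IsDefinite N) :
    ∃ p q t w, 0 < t ∧ 0 < wedge p q ∧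
      (∀ z : Fin 3 → ℤ, z ≠ 0 → 1 ≤ (1 + 1e-5) * N (layerVector p q t w z)) ∧
      8 * 0.54757 * (t * wedge p q) ≤ volume.real (N.closedBall 0 1) := by
  obtain ⟨N₁, hN₁, hg, hle, hle'⟩ :=
    exists_isStrictNorm_planeSection_ge hN (ε := 1e-5) (by norm_num)
  obtain ⟨p, q, t, w, ht, hpq, hadm, hvol⟩ := exists_isAdmissible_of_isStrictNorm hN₁ hg
  refine ⟨p, q, t, w, ht, hpq, fun z hz ↦ (hadm z hz).trans (hle' _), hvol.trans ?_⟩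
  refine measureReal_mono (fun x hx ↦ ?_) (hN.isCompact_closedBall 1).measure_ne_top
  rw [Seminorm.mem_closedBall_zero] at hx ⊢
  exact (hle x).trans hx

end Reduction

/-! ### From symmetric bodies to lattice packings -/

lemma mem_nhds_zero_of_eq_neg {E : Type*} [AddCommGroup E] [Module ℝ E] [TopologicalSpace E]
    [IsTopologicalAddGroup E] [ContinuousConstSMul ℝ E] {K : Set E} (hconv : Convex ℝ K)
    (hint : (interior K).Nonempty) (hsymm : K = -K) : K ∈ nhds 0 := by
  obtain ⟨x, hx⟩ := hint
  have hneg : -x ∈ interior K := by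
    rw [hsymm]
    exact (Homeomorph.neg E).preimage_interior K ▸ by simpa using hx
  have := hconv.interior.midpoint_mem hx hneg
  rw [midpoint_self_neg] at this
  exact mem_interior_iff_mem_nhds.1 this

theorem exists_isDefinite_closedBall_eq {E : Type*} [NormedAddCommGroup E] [NormedSpace ℝ E]
    {K : Set E} (hcompact : IsCompact K) (hconv : Convex ℝ K) (hint : (interior K).Nonempty)
    (hsymm : K = -K) :
    ∃ N : Seminorm ℝ E, IsDefinite N ∧ N.closedBall 0 1 = K ∧ N.ball 0 1 = interior K := by
  have h0 := mem_nhds_zero_of_eq_neg hconv hint hsymm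
  have habs : Absorbent ℝ K := absorbent_nhds_zero h0
  have hbal : Balanced ℝ K := (balanced_iff_neg_mem hconv).2 fun {x} hx ↦ by
    rw [hsymm] at hx
    exact hx
  refine ⟨gaugeSeminorm hbal hconv habs, fun x hx ↦ ?_, ?_, ?_⟩
  · exact (gauge_pos habs (NormedSpace.isVonNBounded_of_isBounded ℝ hcompact.isBounded)).2 hx
  · ext x
    rw [Seminorm.mem_closedBall_zero, gaugeSeminorm_toFun, gauge_le_one_iff_mem_closure hconv h0,
      hcompact.isClosed.closure_eq]
  · ext x
    rw [Seminorm.mem_ball_zero, gaugeSeminorm_toFun, gauge_lt_one_iff_mem_interior hconv h0]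

lemma isLatticePacking_of_two_le {n : ℕ} {M : Matrix (Fin n) (Fin n) ℝ} {K : Set (Fin n → ℝ)}
    {N : Seminorm ℝ (Fin n → ℝ)} (hdet : M.det ≠ 0) (hK : interior K ⊆ N.ball 0 1)
    (hM : ∀ z : Fin n → ℤ, z ≠ 0 → 2 ≤ N (M.mulVec fun i ↦ z i)) : IsLatticePacking M K := by
  refine ⟨hdet, ?_⟩
  rintro _ ⟨z, rfl⟩ _ ⟨z', rfl⟩ hne
  simp only [interior_vadd, Set.disjoint_left]
  rintro _ ⟨k, hk, rfl⟩ ⟨k', hk', heq⟩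
  have hsub : M.mulVec (fun i ↦ ((z - z') i : ℝ)) = k' - k := by
    simp only [vadd_eq_add] at heq
    simp only [Pi.sub_apply, Int.cast_sub]
    rw [← Pi.sub_def, Matrix.mulVec_sub, sub_eq_sub_iff_add_eq_add, ← heq, add_comm]
  have hlt : N (k' - k) < 2 := by
    have h := N.mem_ball_zero.1 (hK hk)
    have h' := N.mem_ball_zero.1 (hK hk')
    linarith [map_sub_le_add N k' k]
  refine hlt.not_ge (hsub ▸ hM (z - z') (sub_ne_zero.2 ?_))
  rintro rfl
  exact hne rfl

/-- The coordinate isomorphism identifying `ℝ × ℝ²` with `ℝ³`. -/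
def coordEquiv : (ℝ × ℝ × ℝ) ≃ₗ[ℝ] (Fin 3 → ℝ) where
  toFun x := ![x.1, x.2.1, x.2.2]
  invFun f := (f 0, f 1, f 2)
  map_add' x y := by simp
  map_smul' c x := by simp
  left_inv x := rfl
  right_inv f := by ext i; fin_cases i <;> rfl

lemma measurePreserving_coordEquiv_symm : MeasurePreserving coordEquiv.symm :=
  ((MeasurePreserving.id volume).prod (volume_preserving_finTwoArrow ℝ)).comp
    (volume_preserving_piFinSuccAbove (fun _ : Fin 3 ↦ ℝ) 0)

lemma volume_closedBall_comp_coordEquiv (N : Seminorm ℝ (Fin 3 → ℝ)) :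
    volume ((N.comp coordEquiv.toLinearMap).closedBall 0 1) = volume (N.closedBall 0 1) := by
  have hemb : MeasurableEmbedding coordEquiv.symm :=
    coordEquiv.symm.toContinuousLinearEquiv.toHomeomorph.measurableEmbedding
  rw [← measurePreserving_coordEquiv_symm.measure_preimage_emb hemb, Seminorm.closedBall_comp,
    map_zero]
  exact congrArg volume (coordEquiv.toEquiv.symm_preimage_preimage _)

lemma coordEquiv_apply (x : ℝ × ℝ × ℝ) : coordEquiv x = ![x.1, x.2.1, x.2.2] := rfl

/-- The matrix whose columns are the coordinates of `layerVector p q t w` at the three standard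
basis vectors. -/
def layerMatrix (p q : ℝ × ℝ) (t : ℝ) (w : ℝ × ℝ) : Matrix (Fin 3) (Fin 3) ℝ :=
  !![0, 0, t; p.1, q.1, w.1; p.2, q.2, w.2]

lemma det_layerMatrix (p q : ℝ × ℝ) (t : ℝ) (w : ℝ × ℝ) :
    (layerMatrix p q t w).det = t * wedge p q := by
  simp [layerMatrix, Matrix.det_fin_three, wedge]
  ring

lemma layerMatrix_mulVec (p q : ℝ × ℝ) (t : ℝ) (w : ℝ × ℝ) (z : Fin 3 → ℤ) :
    (layerMatrix p q t w).mulVec (fun i ↦ z i) = coordEquiv (layerVector p q t w z) := by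
  ext i
  fin_cases i <;>
    simp [layerMatrix, coordEquiv_apply, layerVector, Matrix.mulVec, dotProduct,
      Fin.sum_univ_three] <;>
    ring

/-- Every centrally symmetric convex body `K ⊆ ℝ³` admits a lattice packing
of density at least `0.54755`. -/
theorem packing_density_bound_3space (K : Set (Fin 3 → ℝ))
    (hKcompact : IsCompact K) (hKconv : Convex ℝ K)
    (hKint : (interior K).Nonempty) (hKsymm : K = -K) :
    ∃ M : Matrix (Fin 3) (Fin 3) ℝ, IsLatticePacking M K ∧
      (volume K).toReal / covol M ≥ 0.54755 := by
  obtain ⟨N, hN, hball, hint⟩ := exists_isDefinite_closedBall_eq hKcompact hKconv hKint hKsymm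
  obtain ⟨p, q, t, w, ht, hpq, hadm, hvol⟩ :=
    (hN.comp (f := coordEquiv.toLinearMap) coordEquiv.injective).exists_layerVector
  have hdet : ((2 * (1 + 1e-5) : ℝ) • layerMatrix p q t w).det =
      (2 * (1 + 1e-5)) ^ 3 * (t * wedge p q) := by
    rw [Matrix.det_smul, det_layerMatrix, Fintype.card_fin]
  have hpos : 0 < ((2 * (1 + 1e-5) : ℝ) • layerMatrix p q t w).det := by
    rw [hdet]
    positivity
  refine ⟨_, isLatticePacking_of_two_le hpos.ne' hint.superset fun z hz ↦ ?_, ?_⟩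
  · rw [Matrix.smul_mulVec, layerMatrix_mulVec, map_smul_eq_mul]
    have := hadm z hz
    rw [Real.norm_of_nonneg (by norm_num), mul_assoc]
    exact le_mul_of_one_le_right zero_le_two this
  · rw [covol, abs_of_pos hpos, ge_iff_le, le_div_iff₀ hpos, hdet, ← hball,
      ← volume_closedBall_comp_coordEquiv]
    refine le_trans ?_ hvol
    nlinarith
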